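/- arXiv:0708.2981 — 6 statements merged into one kernel-verified Lean document; each statement's English description precedes it below -/
import Mathlib

section
/- Let n ≥ 1 and let (A(t))_{t∈ℕ} be a sequence of confidence matrices (row-stochastic n×n matrices with nonnegative real entries) such that for some δ > 0 and all t: (1) every diagonal entry of A(t) is positive; (2) the zero pattern of A(t) is symmetric, i.e. A(t)_{ij} > 0 ⟺ A(t)_{ji} > 0 for all i,j; (3) every positive entry of A(t) is greater than δ. Then there exist a time step t₀ ∈ ℕ and a partition of {1,…,n} into pairwise disjoint nonempty classes I₁,…,I_p such that the backward accumulation A(0,t) := A(t−1)·A(t−2)···A(0) converges as t → ∞ to K·A(0,t₀), where K is an n×n row-stochastic matrix with K_{ij} = 0 whenever i and j lie in different classes, and for each class I_l the rows of K indexed by I_l are all equal (so K, after simultaneously permuting rows and columns according to I₁,…,I_p, is block diagonal with consensus-matrix blocks K₁,…,K_p). -/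
open Matrix Filter Finset

/-- A confidence matrix is a row-stochastic matrix with nonnegative entries. -/
def RowStochastic {n : ℕ} (A : Matrix (Fin n) (Fin n) ℝ) : Prop :=
  (∀ i j, 0 ≤ A i j) ∧ ∀ i, ∑ j, A i j = 1

/-- Backward accumulation `A(0,t) = A(t-1) ⋯ A(0)`. -/
def backProd {n : ℕ} (A : ℕ → Matrix (Fin n) (Fin n) ℝ) : ℕ → Matrix (Fin n) (Fin n) ℝ
  | 0 => 1
  | t + 1 => A t * backProd A t

/-!
Call a set `S` of agents absorbing for a confidence matrix when no agent of `S` gives weight to an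
agent outside `S`. Symmetric zero patterns make complements of absorbing sets absorbing, so the sets
that are absorbing from some time on form a finite Boolean algebra. Its atoms are the classes, and
`t₀` is a time from which all of its members are absorbing, so that from `t₀` on the classes evolve
independently.

Within a class, opinions contract to a common limit. Start from the agent of largest opinion. As
long as the set `S` of agents known to lie well above the minimum is absorbing, its lower bound
persists; at the first time it is not, neither is its complement, so some agent outside `S` listens
to an agent of `S` with weight at least `δ` and joins, at the cost of a factor `δ` in the bound.
After boundedly many such steps `S` is the whole class, so the spread of opinions has shrunk by a
fixed factor. The columns of `K` are the limits of the trajectories that start at time `t₀` in the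
unit vectors.
-/

section Absorbing

variable {ι R : Type*}

/-- `S` is absorbing for `A` if the rows indexed by `S` carry no weight outside `S`, as for an
absorbing set of states of a Markov chain; in opinion dynamics the agents of `S` ignore all
others. -/
def IsAbsorbing [Zero R] (A : Matrix ι ι R) (S : Set ι) : Prop :=
  ∀ i ∈ S, ∀ j ∉ S, A i j = 0

theorem IsAbsorbing.sInter [Zero R] {A : Matrix ι ι R} {𝒮 : Set (Set ι)}
    (h : ∀ S ∈ 𝒮, IsAbsorbing A S) : IsAbsorbing A (⋂₀ 𝒮) := by
  intro i hi j hj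
  obtain ⟨S, hS, hjS⟩ : ∃ S ∈ 𝒮, j ∉ S := by simpa using hj
  exact h S hS i (hi S hS) j hjS

theorem IsAbsorbing.one [DecidableEq ι] [Zero R] [One R] (S : Set ι) :
    IsAbsorbing (1 : Matrix ι ι R) S :=
  fun _ hi _ hj => one_apply_ne (ne_of_mem_of_not_mem hi hj)

theorem IsAbsorbing.mul [Fintype ι] [NonUnitalNonAssocSemiring R] {A B : Matrix ι ι R} {S : Set ι}
    (hA : IsAbsorbing A S) (hB : IsAbsorbing B S) : IsAbsorbing (A * B) S := by
  intro i hi j hj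
  rw [mul_apply]
  refine sum_eq_zero fun k _ => ?_
  by_cases hk : k ∈ S
  · rw [hB k hk j hj, mul_zero]
  · rw [hA i hi k hk, zero_mul]

/-- Complements of absorbing sets are absorbing. For a stochastic matrix this says that the Markov
chain has no transient states; it is the qualitative form of cut-balance. -/
def IsCutBalanced [Zero R] (A : Matrix ι ι R) : Prop :=
  ∀ S, IsAbsorbing A S → IsAbsorbing A Sᶜ

theorem IsCutBalanced.of_symm [Zero R] {A : Matrix ι ι R} (h : ∀ i j, A i j = 0 → A j i = 0) :
    IsCutBalanced A :=
  fun _ hS i hi j hj => h j i (hS j (not_not.1 hj) i hi)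

/-- Agents are equivalent when no set that is absorbing from some time on separates them. The
classes are the smallest nonempty eventually absorbing sets. -/
def eventualSetoid [Zero R] (A : ℕ → Matrix ι ι R) (hA : ∀ t, IsCutBalanced (A t)) :
    Setoid ι where
  r i j := ∀ S, (∀ᶠ t in atTop, IsAbsorbing (A t) S) → i ∈ S → j ∈ S
  iseqv :=
    { refl := fun _ _ _ hi => hi
      symm := fun h S hS hj => by
        by_contra hi
        exact h Sᶜ (hS.mono fun t => hA t S) hi hj
      trans := fun h₁ h₂ S hS hi => h₂ S hS (h₁ S hS hi) }

variable [Zero R] {A : ℕ → Matrix ι ι R} {hA : ∀ t, IsCutBalanced (A t)}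

theorem eventually_isAbsorbing_eventualSetoid [Finite ι] :
    ∀ᶠ t in atTop, ∀ i, IsAbsorbing (A t) {j | eventualSetoid A hA i j} := by
  have h_all : ∀ᶠ t in atTop, ∀ S, (∀ᶠ u in atTop, IsAbsorbing (A u) S) → IsAbsorbing (A t) S :=
    eventually_all.2 fun _ => eventually_imp_distrib_left.2 id
  filter_upwards [h_all] with t ht i
  have h_class : {j | eventualSetoid A hA i j} =
      ⋂₀ {S | (∀ᶠ u in atTop, IsAbsorbing (A u) S) ∧ i ∈ S} := by
    ext j
    exact ⟨fun h S hS => h S hS.1 hS.2, fun h S hS hi => h S ⟨hS, hi⟩⟩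
  rw [h_class]
  exact IsAbsorbing.sInter fun S hS => ht S hS.1

theorem frequently_not_isAbsorbing_of_ssubset {i : ι} {S : Set ι}
    (hS : S ⊂ {j | eventualSetoid A hA i j}) (hne : S.Nonempty) :
    ∃ᶠ t in atTop, ¬ IsAbsorbing (A t) S := by
  intro h
  simp only [not_not] at h
  obtain ⟨a, ha⟩ := hne
  obtain ⟨b, hb, hbS⟩ := Set.exists_of_ssubset hS
  have hab : eventualSetoid A hA a b := Setoid.trans' _ (Setoid.symm' _ (hS.subset ha)) hb
  exact hbS (hab S h ha)

end Absorbing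

section Accumulation

/-- The accumulation `A(0,t) = A(t-1) ⋯ A(0)` of a sequence in a monoid. -/
def accumulation {M : Type*} [Monoid M] (A : ℕ → M) : ℕ → M
  | 0 => 1
  | t + 1 => A t * accumulation A t

theorem accumulation_add {M : Type*} [Monoid M] (A : ℕ → M) (s t : ℕ) :
    accumulation A (t + s) = accumulation (fun u => A (u + s)) t * accumulation A s := by
  induction t with
  | zero => rw [Nat.zero_add, accumulation, one_mul]
  | succ t ih => rw [Nat.add_right_comm, accumulation, accumulation, ih, mul_assoc]

theorem accumulation_mem {M : Type*} [Monoid M] {N : Submonoid M} {A : ℕ → M}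
    (hA : ∀ t, A t ∈ N) (t : ℕ) : accumulation A t ∈ N := by
  induction t with
  | zero => exact N.one_mem
  | succ t ih => exact N.mul_mem (hA t) ih

theorem IsAbsorbing.accumulation {ι R : Type*} [Fintype ι] [DecidableEq ι] [Semiring R]
    {A : ℕ → Matrix ι ι R} {S : Set ι} (hS : ∀ t, IsAbsorbing (A t) S) (t : ℕ) :
    IsAbsorbing (accumulation A t) S := by
  induction t with
  | zero => exact .one S
  | succ t ih => exact (hS t).mul ih

theorem backProd_eq_accumulation {n : ℕ} (A : ℕ → Matrix (Fin n) (Fin n) ℝ) (t : ℕ) :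
    backProd A t = accumulation A t := by
  induction t with
  | zero => rfl
  | succ t ih => rw [backProd, accumulation, ih]

end Accumulation

theorem tendsto_zero_of_antitone_of_exists_le_mul {D : ℕ → ℝ} (h_anti : Antitone D)
    (h_nonneg : ∀ t, 0 ≤ D t) {q : ℝ} (hq : q < 1) (h_contract : ∀ s, ∃ t ≥ s, D t ≤ q * D s) :
    Tendsto D atTop (nhds 0) := by
  have h_bdd : BddBelow (Set.range D) := ⟨0, Set.forall_mem_range.2 h_nonneg⟩
  have h_lim := tendsto_atTop_ciInf h_anti h_bdd
  have h_le : ⨅ t, D t ≤ q * ⨅ t, D t :=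
    ge_of_tendsto' (h_lim.const_mul q) fun s =>
      let ⟨t, _, ht⟩ := h_contract s
      (ciInf_le h_bdd t).trans ht
  have h_zero : ⨅ t, D t = 0 := le_antisymm (by nlinarith) (le_ciInf h_nonneg)
  rwa [h_zero] at h_lim

section OneStep

variable {ι : Type*} [Fintype ι] [DecidableEq ι] {A : Matrix ι ι ℝ} {S : Set ι} {x : ι → ℝ}

theorem IsAbsorbing.le_mulVec (hS : IsAbsorbing A S) (hA : A ∈ rowStochastic ℝ ι) {m : ℝ}
    (hm : ∀ i ∈ S, m ≤ x i) : ∀ i ∈ S, m ≤ (A *ᵥ x) i := by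
  intro i hi
  calc m = ∑ j, A i j * m := by rw [← sum_mul, sum_row_of_mem_rowStochastic hA, one_mul]
    _ ≤ ∑ j, A i j * x j := sum_le_sum fun j _ => by
      by_cases hj : j ∈ S
      · exact mul_le_mul_of_nonneg_left (hm j hj) (nonneg_of_mem_rowStochastic hA)
      · rw [hS i hi j hj, zero_mul, zero_mul]

theorem IsAbsorbing.mul_le_mulVec (hS : IsAbsorbing A S) (hA : A ∈ rowStochastic ℝ ι)
    (hx : ∀ i ∈ S, 0 ≤ x i) {i : ι} (hi : i ∈ S) (k : ι) : A i k * x k ≤ (A *ᵥ x) i := by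
  refine single_le_sum (f := fun j => A i j * x j) (fun j _ => ?_) (mem_univ k)
  by_cases hj : j ∈ S
  · exact mul_nonneg (nonneg_of_mem_rowStochastic hA) (hx j hj)
  · rw [hS i hi j hj, zero_mul]

end OneStep

section Trajectory

variable {ι : Type*} [Fintype ι]

/-- Trajectories of the opinion dynamics, in which every agent averages the current opinions with
the weights in its row of `A t`. -/
def IsTrajectory (A : ℕ → Matrix ι ι ℝ) (x : ℕ → ι → ℝ) : Prop :=
  ∀ t, x (t + 1) = A t *ᵥ x t

variable {A : ℕ → Matrix ι ι ℝ} {x : ℕ → ι → ℝ}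

theorem isTrajectory_accumulation_col [DecidableEq ι] (A : ℕ → Matrix ι ι ℝ) (j : ι) :
    IsTrajectory A fun t i => accumulation A t i j :=
  fun _ => rfl

theorem IsTrajectory.neg (hx : IsTrajectory A x) : IsTrajectory A fun t => -x t :=
  fun t => by simp only [hx t, mulVec_neg]

variable [DecidableEq ι]

theorem IsTrajectory.sub_const (hx : IsTrajectory A x) (hA : ∀ t, A t ∈ rowStochastic ℝ ι)
    (m : ℝ) : IsTrajectory A fun t => x t - m • 1 :=
  fun t => by simp only [hx t, mulVec_sub, mulVec_smul, one_vecMul_of_mem_rowStochastic (hA t)]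

theorem IsTrajectory.forall_mem_le (hx : IsTrajectory A x) (hA : ∀ t, A t ∈ rowStochastic ℝ ι)
    {S : Set ι} {s t : ℕ} (hst : s ≤ t) (hS : ∀ u, s ≤ u → u < t → IsAbsorbing (A u) S) {m : ℝ}
    (hm : ∀ i ∈ S, m ≤ x s i) : ∀ i ∈ S, m ≤ x t i := by
  induction t, hst using Nat.le_induction with
  | base => exact hm
  | succ t hst ih =>
    rw [hx t]
    exact (hS t hst t.lt_succ_self).le_mulVec (hA t)
      (ih fun u hsu hut => hS u hsu (hut.trans t.lt_succ_self))

variable {C : Set ι}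

theorem IsTrajectory.monotone_iInf (hx : IsTrajectory A x) (hA : ∀ t, A t ∈ rowStochastic ℝ ι)
    (hC : ∀ t, IsAbsorbing (A t) C) (hne : C.Nonempty) : Monotone fun t => ⨅ i : C, x t i := by
  have := hne.to_subtype
  refine fun s t hst => le_ciInf fun i => hx.forall_mem_le hA hst (fun u _ _ => hC u) ?_ i i.2
  exact fun j hj => ciInf_le (Set.finite_range _).bddBelow (⟨j, hj⟩ : C)

theorem IsTrajectory.antitone_iSup (hx : IsTrajectory A x) (hA : ∀ t, A t ∈ rowStochastic ℝ ι)
    (hC : ∀ t, IsAbsorbing (A t) C) (hne : C.Nonempty) : Antitone fun t => ⨆ i : C, x t i := by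
  have := hne.to_subtype
  refine fun s t hst => ciSup_le fun i => neg_le_neg_iff.1 <|
    hx.neg.forall_mem_le hA hst (fun u _ _ => hC u) ?_ i i.2
  exact fun j hj => neg_le_neg <|
    le_ciSup (f := fun i : C => x s i) (Set.finite_range _).bddAbove ⟨j, hj⟩

variable {δ : ℝ}

theorem IsTrajectory.exists_forall_mem_insert_mul_le (hx : IsTrajectory A x)
    (hA : ∀ t, A t ∈ rowStochastic ℝ ι) (hdiag : ∀ t i, 0 < A t i i)
    (hbal : ∀ t, IsCutBalanced (A t)) (hmin : ∀ t i j, 0 < A t i j → δ ≤ A t i j)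
    (hC : ∀ t, IsAbsorbing (A t) C) {S : Set ι} (hSC : S ⊆ C)
    (hfreq : ∃ᶠ t in atTop, ¬ IsAbsorbing (A t) S) {s : ℕ} {c : ℝ} (hc : 0 ≤ c)
    (h_nonneg : ∀ i ∈ C, 0 ≤ x s i) (h_le : ∀ i ∈ S, c ≤ x s i) :
    ∃ j ∈ C, j ∉ S ∧ ∃ t ≥ s, ∀ i ∈ insert j S, δ * c ≤ x t i := by
  classical
  have h_exit := frequently_atTop.1 hfreq s
  obtain ⟨hst, h_not⟩ := Nat.find_spec h_exit
  set t := Nat.find h_exit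
  have h_before : ∀ u, s ≤ u → u < t → IsAbsorbing (A u) S := fun u hsu hut =>
    not_not.1 fun h => Nat.find_min h_exit hut ⟨hsu, h⟩
  have h_le_t : ∀ i ∈ S, c ≤ x t i := hx.forall_mem_le hA hst h_before h_le
  have h_nonneg_t : ∀ i ∈ C, 0 ≤ x t i := hx.forall_mem_le hA hst (fun u _ _ => hC u) h_nonneg
  obtain ⟨j, hjS, k, hkS, hjk⟩ : ∃ j ∉ S, ∃ k ∈ S, A t j k ≠ 0 := by
    have h_compl : ¬ IsAbsorbing (A t) Sᶜ := fun h => h_not (compl_compl S ▸ hbal t Sᶜ h)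
    simpa [IsAbsorbing] using h_compl
  have hjC : j ∈ C := by
    by_contra hj
    exact hjk (hbal t C (hC t) j hj k (not_not.2 (hSC hkS)))
  have h_listen : ∀ i ∈ C, ∀ l ∈ S, 0 < A t i l → δ * c ≤ x (t + 1) i := by
    intro i hi l hl h_pos
    calc δ * c ≤ A t i l * x t l :=
          mul_le_mul (hmin t i l h_pos) (h_le_t l hl) hc h_pos.le
      _ ≤ x (t + 1) i := hx t ▸ (hC t).mul_le_mulVec (hA t) h_nonneg_t hi l
  refine ⟨j, hjC, hjS, t + 1, hst.trans t.le_succ, ?_⟩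
  rintro i (rfl | hi)
  · exact h_listen i hjC k hkS (lt_of_le_of_ne (nonneg_of_mem_rowStochastic (hA t)) hjk.symm)
  · exact h_listen i (hSC hi) i hi (hdiag t i)

theorem IsTrajectory.exists_forall_mem_pow_mul_le (hx : IsTrajectory A x)
    (hA : ∀ t, A t ∈ rowStochastic ℝ ι) (hdiag : ∀ t i, 0 < A t i i)
    (hbal : ∀ t, IsCutBalanced (A t)) (hδ : 0 ≤ δ) (hmin : ∀ t i j, 0 < A t i j → δ ≤ A t i j)
    (hC : ∀ t, IsAbsorbing (A t) C)
    (hfreq : ∀ S ⊂ C, S.Nonempty → ∃ᶠ t in atTop, ¬ IsAbsorbing (A t) S) {k : ℕ} {S : Set ι}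
    (hSC : S ⊆ C) (hne : S.Nonempty) (hk : S.ncard + k = C.ncard) {s : ℕ} {c : ℝ} (hc : 0 ≤ c)
    (h_nonneg : ∀ i ∈ C, 0 ≤ x s i) (h_le : ∀ i ∈ S, c ≤ x s i) :
    ∃ t ≥ s, ∀ i ∈ C, δ ^ k * c ≤ x t i := by
  induction k generalizing S s c with
  | zero =>
    obtain rfl : S = C := Set.eq_of_subset_of_ncard_le hSC hk.ge
    exact ⟨s, le_rfl, by simpa using h_le⟩
  | succ k ih =>
    have hS : S ⊂ C := hSC.ssubset_of_ne fun h => by simp [h] at hk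
    obtain ⟨j, hjC, hjS, t, hst, ht⟩ := hx.exists_forall_mem_insert_mul_le hA hdiag hbal hmin hC hSC
      (hfreq S hS hne) hc h_nonneg h_le
    have h_card : (insert j S).ncard + k = C.ncard := by
      rw [Set.ncard_insert_of_notMem hjS]
      lia
    obtain ⟨t', htt', ht'⟩ := ih (Set.insert_subset hjC hSC) (Set.insert_nonempty j S) h_card
      (mul_nonneg hδ hc) (hx.forall_mem_le hA hst (fun u _ _ => hC u) h_nonneg) ht
    exact ⟨t', hst.trans htt', by simpa only [pow_succ, mul_assoc] using ht'⟩

theorem IsTrajectory.exists_iSup_sub_iInf_le_mul (hx : IsTrajectory A x)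
    (hA : ∀ t, A t ∈ rowStochastic ℝ ι) (hdiag : ∀ t i, 0 < A t i i)
    (hbal : ∀ t, IsCutBalanced (A t)) (hδ : 0 < δ) (hmin : ∀ t i j, 0 < A t i j → δ ≤ A t i j)
    (hC : ∀ t, IsAbsorbing (A t) C) (hne : C.Nonempty)
    (hfreq : ∀ S ⊂ C, S.Nonempty → ∃ᶠ t in atTop, ¬ IsAbsorbing (A t) S) :
    ∃ q < 1, ∀ s, ∃ t ≥ s,
      (⨆ i : C, x t i) - ⨅ i : C, x t i ≤ q * ((⨆ i : C, x s i) - ⨅ i : C, x s i) := by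
  have := hne.to_subtype
  obtain ⟨k, hk⟩ := Nat.exists_eq_add_of_le ((Set.ncard_pos C.toFinite).2 hne)
  refine ⟨1 - δ ^ k, sub_lt_self 1 (pow_pos hδ k), fun s => ?_⟩
  obtain ⟨top, h_top⟩ := exists_eq_ciSup_of_finite (f := fun i : C => x s i)
  set m := ⨅ i : C, x s i
  have h_inf : ∀ i ∈ C, m ≤ x s i := fun i hi =>
    ciInf_le (Set.finite_range _).bddBelow (⟨i, hi⟩ : C)
  obtain ⟨t, hst, ht⟩ := (hx.sub_const hA m).exists_forall_mem_pow_mul_le hA hdiag hbal hδ.le hmin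
    hC hfreq (k := k) (S := {top.1}) (Set.singleton_subset_iff.2 top.2) (Set.singleton_nonempty _)
    (by rw [Set.ncard_singleton, hk]) (s := s) (c := x s top - m)
    (sub_nonneg.2 (h_inf top top.2)) (fun i hi => by simpa using h_inf i hi) (by simp)
  refine ⟨t, hst, ?_⟩
  have h_sup : ⨆ i : C, x t i ≤ x s top := h_top ▸ hx.antitone_iSup hA hC hne hst
  have h_lower : m + δ ^ k * (x s top - m) ≤ ⨅ i : C, x t i :=
    le_ciInf fun i => le_sub_iff_add_le'.1 (by simpa using ht i i.2)
  rw [← h_top]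
  linarith

theorem IsTrajectory.exists_forall_mem_tendsto (hx : IsTrajectory A x)
    (hA : ∀ t, A t ∈ rowStochastic ℝ ι) (hdiag : ∀ t i, 0 < A t i i)
    (hbal : ∀ t, IsCutBalanced (A t)) (hδ : 0 < δ) (hmin : ∀ t i j, 0 < A t i j → δ ≤ A t i j)
    (hC : ∀ t, IsAbsorbing (A t) C) (hne : C.Nonempty)
    (hfreq : ∀ S ⊂ C, S.Nonempty → ∃ᶠ t in atTop, ¬ IsAbsorbing (A t) S) :
    ∃ L, ∀ i ∈ C, Tendsto (fun t => x t i) atTop (nhds L) := by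
  have := hne.to_subtype
  have h_inf_mono := hx.monotone_iInf hA hC hne
  have h_sup_anti := hx.antitone_iSup hA hC hne
  have h_inf_le : ∀ t (i : C), ⨅ i : C, x t i ≤ x t i := fun t i =>
    ciInf_le (Set.finite_range _).bddBelow i
  have h_le_sup : ∀ t (i : C), x t i ≤ ⨆ i : C, x t i := fun t i =>
    le_ciSup (f := fun i : C => x t i) (Set.finite_range _).bddAbove i
  have h_inf_le_sup : ∀ t, ⨅ i : C, x t i ≤ ⨆ i : C, x t i := fun t =>
    (h_inf_le t (Classical.arbitrary C)).trans (h_le_sup t _)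
  have h_inf_bdd : BddAbove (Set.range fun t => ⨅ i : C, x t i) :=
    ⟨⨆ i : C, x 0 i, Set.forall_mem_range.2 fun t =>
      (h_inf_le_sup t).trans (h_sup_anti t.zero_le)⟩
  have h_inf_lim := tendsto_atTop_ciSup h_inf_mono h_inf_bdd
  obtain ⟨q, hq, h_contract⟩ := hx.exists_iSup_sub_iInf_le_mul hA hdiag hbal hδ hmin hC hne hfreq
  have h_spread := tendsto_zero_of_antitone_of_exists_le_mul
    (fun s t hst => sub_le_sub (h_sup_anti hst) (h_inf_mono hst))
    (fun t => sub_nonneg.2 (h_inf_le_sup t)) hq h_contract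
  have h_sup_lim := h_spread.add h_inf_lim
  simp only [sub_add_cancel, zero_add] at h_sup_lim
  exact ⟨_, fun i hi => tendsto_of_tendsto_of_tendsto_of_le_of_le h_inf_lim h_sup_lim
    (fun t => h_inf_le t ⟨i, hi⟩) fun t => h_le_sup t ⟨i, hi⟩⟩

end Trajectory

section Stabilization

variable {ι : Type*}

theorem isClosed_setOf_isAbsorbing {R : Type*} [Zero R] [TopologicalSpace R] [T1Space R]
    (S : Set ι) : IsClosed {A : Matrix ι ι R | IsAbsorbing A S} := by
  simp only [IsAbsorbing, Set.ofPred_forall]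
  exact isClosed_iInter fun i => isClosed_iInter fun _ => isClosed_iInter fun j =>
    isClosed_iInter fun _ => isClosed_singleton.preimage (continuous_id.matrix_elem i j)

theorem exists_surjective_fin_eq_iff [Finite ι] (r : Setoid ι) :
    ∃ (p : ℕ) (f : ι → Fin p), f.Surjective ∧ ∀ i j, f i = f j ↔ r i j := by
  let e := Finite.equivFin (Quotient r)
  exact ⟨_, fun i => e ⟦i⟧, e.surjective.comp Quotient.mk_surjective,
    fun i j => e.injective.eq_iff.trans Quotient.eq⟩

variable [Fintype ι] [DecidableEq ι]

theorem isClosed_rowStochastic : IsClosed (rowStochastic ℝ ι : Set (Matrix ι ι ℝ)) := by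
  have h_set : (rowStochastic ℝ ι : Set (Matrix ι ι ℝ)) =
      {M | ∀ i j, 0 ≤ M i j} ∩ {M | M *ᵥ 1 = 1} := rfl
  rw [h_set]
  refine .inter ?_ (isClosed_eq (by fun_prop) continuous_const)
  simp only [Set.ofPred_forall]
  exact isClosed_iInter fun i => isClosed_iInter fun j =>
    isClosed_le continuous_const (continuous_id.matrix_elem i j)

theorem exists_setoid_tendsto_accumulation (A : ℕ → Matrix ι ι ℝ) {δ : ℝ} (hδ : 0 < δ)
    (hA : ∀ t, A t ∈ rowStochastic ℝ ι) (hdiag : ∀ t i, 0 < A t i i)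
    (hbal : ∀ t, IsCutBalanced (A t)) (hmin : ∀ t i j, 0 < A t i j → δ ≤ A t i j) :
    ∃ (t₀ : ℕ) (r : Setoid ι), ∃ K ∈ rowStochastic ℝ ι,
      (∀ i j, ¬ r i j → K i j = 0) ∧ (∀ i j, r i j → K i = K j) ∧
      Tendsto (accumulation A) atTop (nhds (K * accumulation A t₀)) := by
  let r := eventualSetoid A hbal
  obtain ⟨t₀, ht₀⟩ := eventually_atTop.1 (eventually_isAbsorbing_eventualSetoid (hA := hbal))
  let B : ℕ → Matrix ι ι ℝ := fun t => A (t + t₀)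
  have h_class : ∀ i t, IsAbsorbing (B t) {j | r i j} := fun i t => ht₀ _ (t₀.le_add_left t) i
  have h_freq : ∀ i, ∀ S ⊂ {j | r i j}, S.Nonempty → ∃ᶠ t in atTop, ¬ IsAbsorbing (B t) S := by
    intro i S hS hne
    have h := frequently_not_isAbsorbing_of_ssubset hS hne
    rwa [← map_add_atTop_eq_nat t₀, frequently_map] at h
  have h_lim : ∀ i j, ∃ L, ∀ k ∈ {k | r i k},
      Tendsto (fun t => accumulation B t k j) atTop (nhds L) := fun i j =>
    (isTrajectory_accumulation_col B j).exists_forall_mem_tendsto (fun _ => hA _) (fun _ => hdiag _)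
      (fun _ => hbal _) hδ (fun _ => hmin _) (h_class i) ⟨i, r.refl i⟩ (h_freq i)
  choose K hK using h_lim
  have h_tendsto : Tendsto (accumulation B) atTop (nhds (Matrix.of K)) :=
    tendsto_pi_nhds.2 fun i => tendsto_pi_nhds.2 fun j => hK i j i (r.refl i)
  refine ⟨t₀, r, of K, ?_, fun i j hij => ?_, fun i j hij => ?_, ?_⟩
  · exact isClosed_rowStochastic.mem_of_tendsto h_tendsto
      (.of_forall (accumulation_mem fun _ => hA _))
  · have h_abs : IsAbsorbing (of K) {j | r i j} :=
      (isClosed_setOf_isAbsorbing _).mem_of_tendsto h_tendsto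
        (.of_forall (IsAbsorbing.accumulation (h_class i)))
    exact h_abs i (r.refl i) j hij
  · exact funext fun k => tendsto_nhds_unique (hK i k j hij) (hK j k j (r.refl j))
  · rw [← tendsto_add_atTop_iff_nat t₀]
    simpa only [accumulation_add] using h_tendsto.mul_const (accumulation A t₀)

theorem stabilization_general (A : ℕ → Matrix ι ι ℝ) {δ : ℝ} (hδ : 0 < δ)
    (hA : ∀ t, A t ∈ rowStochastic ℝ ι) (hdiag : ∀ t i, 0 < A t i i)
    (hbal : ∀ t, IsCutBalanced (A t)) (hmin : ∀ t i j, 0 < A t i j → δ ≤ A t i j) :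
    ∃ (t₀ : ℕ) (p : ℕ) (I : Fin p → Finset ι),
      (∀ l, (I l).Nonempty) ∧
      (∀ l m, l ≠ m → Disjoint (I l) (I m)) ∧
      (∀ i, ∃ l, i ∈ I l) ∧
      ∃ K : Matrix ι ι ℝ,
        K ∈ rowStochastic ℝ ι ∧
        (∀ l m, l ≠ m → ∀ i ∈ I l, ∀ j ∈ I m, K i j = 0) ∧
        (∀ l, ∀ i ∈ I l, ∀ j ∈ I l, K i = K j) ∧
        Tendsto (fun t => accumulation A t) atTop (nhds (K * accumulation A t₀)) := by
  obtain ⟨t₀, r, K, hK, h_zero, h_eq, h_tendsto⟩ :=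
    exists_setoid_tendsto_accumulation A hδ hA hdiag hbal hmin
  obtain ⟨p, f, hf, hr⟩ := exists_surjective_fin_eq_iff r
  refine ⟨t₀, p, fun l => {i | f i = l}, fun l => ?_, fun l m hlm => ?_, fun i => ⟨f i, by simp⟩,
    K, hK, ?_, ?_, h_tendsto⟩
  · simpa [Finset.Nonempty] using hf l
  · exact disjoint_filter.2 fun i _ hl hm => hlm (hl.symm.trans hm)
  · simp only [mem_filter_univ]
    rintro _ _ hlm i rfl j rfl
    exact h_zero i j (mt (hr i j).2 hlm)
  · simp only [mem_filter_univ]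
    rintro _ i rfl j hj
    exact h_eq i j ((hr i j).1 hj.symm)

end Stabilization

theorem rowStochastic_iff_mem {n : ℕ} {A : Matrix (Fin n) (Fin n) ℝ} :
    RowStochastic A ↔ A ∈ rowStochastic ℝ (Fin n) :=
  mem_rowStochastic_iff_sum.symm

theorem RowStochastic.isCutBalanced {n : ℕ} {A : Matrix (Fin n) (Fin n) ℝ} (hA : RowStochastic A)
    (hsym : ∀ i j, 0 < A i j ↔ 0 < A j i) : IsCutBalanced A :=
  .of_symm fun i j h => le_antisymm (not_lt.1 fun hji => ((hsym i j).2 hji).ne' h) (hA.1 j i)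

/-- **Stabilization theorem.** Under positive diagonals, symmetric zero pattern and a
uniform positive lower bound `δ` on positive entries, the backward accumulations converge
to `K · A(0,t₀)` where `K` is block diagonal (w.r.t. a partition `I₁,…,I_p` of the agents)
with consensus-matrix blocks. -/
theorem stabilization
    (n : ℕ) (hn : 1 ≤ n) (A : ℕ → Matrix (Fin n) (Fin n) ℝ) (δ : ℝ) (hδ : 0 < δ)
    (hstoch : ∀ t, RowStochastic (A t))
    (hdiag : ∀ t i, 0 < A t i i)
    (hsym : ∀ t i j, 0 < A t i j ↔ 0 < A t j i)
    (hmin : ∀ t i j, 0 < A t i j → δ < A t i j) :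
    ∃ (t₀ : ℕ) (p : ℕ) (I : Fin p → Finset (Fin n)),
      (∀ l, (I l).Nonempty) ∧
      (∀ l m, l ≠ m → Disjoint (I l) (I m)) ∧
      (∀ i : Fin n, ∃ l, i ∈ I l) ∧
      ∃ K : Matrix (Fin n) (Fin n) ℝ,
        RowStochastic K ∧
        (∀ l m, l ≠ m → ∀ i ∈ I l, ∀ j ∈ I m, K i j = 0) ∧
        (∀ l, ∀ i ∈ I l, ∀ j ∈ I l, K i = K j) ∧
        Tendsto (fun t => backProd A t) atTop (nhds (K * backProd A t₀)) := by
  simpa only [rowStochastic_iff_mem, backProd_eq_accumulation] using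
    stabilization_general A hδ (fun t => rowStochastic_iff_mem.1 (hstoch t)) hdiag
      (fun t => (hstoch t).isCutBalanced (hsym t)) fun t i j h => (hmin t i j h).le
end

section
/- Let A, B ∈ ℝ^{n×n} be row-stochastic nonnegative matrices such that A has a strictly positive diagonal and a symmetric zero pattern (A_{ij} > 0 ⟺ A_{ji} > 0 for all i,j), and B has at least one positive entry. If μ(AB) < μ(B), where μ(M) denotes the lowest positive entry of a nonnegative matrix M, then there exists a pair of indices (i,j) such that (AB)_{ij} > 0 and B_{ij} = 0. Equivalently: if AB and B have the same zero pattern, then μ(AB) ≥ μ(B). -/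
open Matrix Finset

/-- The lowest positive entry of a matrix. -/
noncomputable def muPos {n : ℕ} (M : Matrix (Fin n) (Fin n) ℝ) : ℝ :=
  sInf {x : ℝ | 0 < x ∧ ∃ i j, M i j = x}

/-!
Suppose `AB` has no positive entry where `B` vanishes, and let `(AB) i j > 0`, so that `B i j > 0`.
If `A i k > 0`, then `A k i > 0` by symmetry, so `(AB) k j ≥ A k i * B i j > 0` and hence
`B k j > 0`. Thus `(AB) i j` averages, with weights `A i k`, only positive entries of `B`, and is
at least the lowest of them.
-/

section PosEntries

variable {R m n : Type*}

/-- The set of positive entries of a matrix. The lowest positive entry `μ(M)` is described over a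
general `R` as an `a` with `IsLeast (posEntries M) a`, so that no value is assigned to `μ(M)` when
`M` has no positive entry. -/
def posEntries [Zero R] [LT R] (M : Matrix m n R) : Set R :=
  {x | 0 < x ∧ ∃ i j, M i j = x}

theorem posEntries_nonempty [Zero R] [LT R] {M : Matrix m n R} :
    (posEntries M).Nonempty ↔ ∃ i j, 0 < M i j := by
  constructor
  · rintro ⟨_, hpos, i, j, rfl⟩
    exact ⟨i, j, hpos⟩
  · rintro ⟨i, j, hpos⟩
    exact ⟨M i j, hpos, i, j, rfl⟩

theorem finite_posEntries [Zero R] [LT R] [Finite m] [Finite n] (M : Matrix m n R) :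
    (posEntries M).Finite :=
  (Set.finite_range fun p : m × n => M p.1 p.2).subset fun _ ⟨_, i, j, hij⟩ => ⟨(i, j), hij⟩

theorem isLeast_muPos {n : ℕ} {M : Matrix (Fin n) (Fin n) ℝ} (hM : (posEntries M).Nonempty) :
    IsLeast (posEntries M) (muPos M) :=
  ⟨hM.csInf_mem (finite_posEntries M), fun _ hx => csInf_le (finite_posEntries M).bddBelow hx⟩

end PosEntries

section Product

variable {R l m n : Type*} [Semiring R] [PartialOrder R] [IsStrictOrderedRing R] [Fintype m]

theorem mul_apply_pos {A : Matrix l m R} {B : Matrix m n R} (hA : ∀ i j, 0 ≤ A i j)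
    (hB : ∀ i j, 0 ≤ B i j) {i : l} {k : m} {j : n} (hik : 0 < A i k) (hkj : 0 < B k j) :
    0 < (A * B) i j := by
  rw [Matrix.mul_apply]
  exact Finset.sum_pos' (fun k _ => mul_nonneg (hA i k) (hB k j))
    ⟨k, Finset.mem_univ k, mul_pos hik hkj⟩

theorem posEntries_mul_nonempty {A : Matrix l m R} {B : Matrix m n R} (hA : ∀ i j, 0 ≤ A i j)
    (hB : ∀ i j, 0 ≤ B i j) (hcol : ∀ k, ∃ i, 0 < A i k) (hBpos : (posEntries B).Nonempty) :
    (posEntries (A * B)).Nonempty := by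
  obtain ⟨k, j, hkj⟩ := posEntries_nonempty.1 hBpos
  obtain ⟨i, hik⟩ := hcol k
  exact posEntries_nonempty.2 ⟨i, j, mul_apply_pos hA hB hik hkj⟩

theorem le_mul_apply_of_le {A : Matrix l m R} {B : Matrix m n R} {c : R} {i : l} {j : n}
    (hA : ∀ k, 0 ≤ A i k) (hrow : 1 ≤ ∑ k, A i k) (hc : 0 ≤ c)
    (hle : ∀ k, 0 < A i k → c ≤ B k j) : c ≤ (A * B) i j :=
  calc
    c ≤ (∑ k, A i k) * c := le_mul_of_one_le_left hc hrow
    _ = ∑ k, A i k * c := Finset.sum_mul ..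
    _ ≤ ∑ k, A i k * B k j := by
      refine Finset.sum_le_sum fun k _ => ?_
      rcases (hA k).eq_or_lt with hzero | hpos
      · simp only [← hzero, zero_mul, le_refl]
      · exact mul_le_mul_of_nonneg_left (hle k hpos) hpos.le
    _ = (A * B) i j := Matrix.mul_apply.symm

theorem mem_lowerBounds_posEntries_mul {A : Matrix m m R} {B : Matrix m n R} {c : R}
    (hA : ∀ i j, 0 ≤ A i j) (hrow : ∀ i, 1 ≤ ∑ j, A i j) (hsymm : ∀ i j, 0 < A i j → 0 < A j i)
    (hB : ∀ i j, 0 ≤ B i j) (hAB : ∀ i j, 0 < (A * B) i j → 0 < B i j)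
    (hc : 0 ≤ c) (hcB : c ∈ lowerBounds (posEntries B)) :
    c ∈ lowerBounds (posEntries (A * B)) := by
  rintro _ ⟨hpos, i, j, rfl⟩
  have neighbour_pos : ∀ k, 0 < A i k → 0 < B k j := fun k hik =>
    hAB k j (mul_apply_pos hA hB (hsymm i k hik) (hAB i j hpos))
  exact le_mul_apply_of_le (hA i) (hrow i) hc fun k hik => hcB ⟨neighbour_pos k hik, k, j, rfl⟩

theorem mu_decrease_loses_zero_general {A : Matrix m m R} {B : Matrix m n R} {a b : R}
    (hA : ∀ i j, 0 ≤ A i j) (hrow : ∀ i, 1 ≤ ∑ j, A i j) (hsymm : ∀ i j, 0 < A i j → 0 < A j i)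
    (hB : ∀ i j, 0 ≤ B i j) (hb : IsLeast (posEntries B) b) (ha : IsLeast (posEntries (A * B)) a) :
    (a < b → ∃ i j, 0 < (A * B) i j ∧ B i j = 0) ∧
    ((∀ i j, (A * B) i j = 0 ↔ B i j = 0) → b ≤ a) := by
  have le_of_no_loss (h : ∀ i j, 0 < (A * B) i j → B i j ≠ 0) : b ≤ a :=
    mem_lowerBounds_posEntries_mul hA hrow hsymm hB
      (fun i j hpos => (hB i j).lt_of_ne' (h i j hpos)) hb.1.1.le hb.2 ha.1
  refine ⟨fun hlt => ?_, fun hzero => le_of_no_loss fun i j hpos => (hzero i j).not.1 hpos.ne'⟩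
  by_contra! h
  exact hlt.not_ge (le_of_no_loss h)

end Product

/-- If `μ(AB) < μ(B)` then the product `AB` must have a positive entry where `B` has a zero;
equivalently, if `AB` and `B` have the same zero pattern then `μ(AB) ≥ μ(B)`. -/
theorem mu_decrease_loses_zero
    (n : ℕ) (A B : Matrix (Fin n) (Fin n) ℝ)
    (hA : RowStochastic A) (hB : RowStochastic B)
    (hAdiag : ∀ i, 0 < A i i)
    (hAsym : ∀ i j, 0 < A i j ↔ 0 < A j i)
    (hBpos : ∃ i j, 0 < B i j) :
    (muPos (A * B) < muPos B → ∃ i j, 0 < (A * B) i j ∧ B i j = 0) ∧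
    ((∀ i j, (A * B) i j = 0 ↔ B i j = 0) → muPos B ≤ muPos (A * B)) :=
  have hne := posEntries_nonempty.2 hBpos
  mu_decrease_loses_zero_general hA.1 (fun i => (hA.2 i).ge) (fun i j => (hAsym i j).1) hB.1
    (isLeast_muPos hne)
    (isLeast_muPos (posEntries_mul_nonempty hA.1 hB.1 (fun k => ⟨k, hAdiag k⟩) hne))
end

section
/- Let A ∈ ℝ^{n×n} be a row-stochastic nonnegative matrix and let B ∈ ℝ^{n×n} be arbitrary. Define the row-diameter d(M) of an n×n matrix M as the maximum Euclidean distance between two rows of M. Then d(AB) ≤ (1 − min_{i,j} Σ_{k=1}^{n} min{A_{ik}, A_{jk}}) · d(B). -/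
/-!
Removing the common part `min p q` from two weight vectors `p` and `q` with equal sums does not
change the difference of the weighted sums of points. What remains are two nonnegative weight
vectors of the same mass `∑ p - ∑ min p q`, so up to this factor the difference is one between two
points of the convex hull of the given points, which has the same diameter as the points themselves.
-/

open Matrix Finset

/-- The row-diameter of a matrix: the maximum Euclidean distance between two rows. -/
noncomputable def rowDiam {n : ℕ} (M : Matrix (Fin n) (Fin n) ℝ) : ℝ :=
  ⨆ (i : Fin n) (j : Fin n), Real.sqrt (∑ k, (M i k - M j k) ^ 2)

section Diam

open Metric Bornology

lemma diam_range_eq_iSup_iSup_dist {ι X : Type*} [PseudoMetricSpace X] {f : ι → X}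
    (hf : IsBounded (Set.range f)) : diam (Set.range f) = ⨆ i, ⨆ j, dist (f i) (f j) := by
  have dist_le_diam (i j : ι) : dist (f i) (f j) ≤ diam (Set.range f) :=
    dist_le_diam_of_mem hf (Set.mem_range_self i) (Set.mem_range_self j)
  have iSup_dist_le_diam (i : ι) : ⨆ j, dist (f i) (f j) ≤ diam (Set.range f) :=
    Real.iSup_le (dist_le_diam i) diam_nonneg
  apply le_antisymm
  · refine diam_le_of_forall_dist_le
      (Real.iSup_nonneg fun _ => Real.iSup_nonneg fun _ => dist_nonneg) ?_
    rintro _ ⟨i, rfl⟩ _ ⟨j, rfl⟩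
    exact le_ciSup_of_le ⟨_, Set.forall_mem_range.2 iSup_dist_le_diam⟩ i
      (le_ciSup (f := fun j => dist (f i) (f j)) ⟨_, Set.forall_mem_range.2 (dist_le_diam i)⟩ j)
  · exact Real.iSup_le iSup_dist_le_diam diam_nonneg

variable {E κ : Type*} [SeminormedAddCommGroup E] [NormedSpace ℝ E]
  {t : Finset κ} {p q : κ → ℝ} {b : κ → E} {S : Set E}

lemma dist_sum_smul_le_of_nonneg (hS : IsBounded S) (hb : ∀ k ∈ t, b k ∈ S)
    (hp : ∀ k ∈ t, 0 ≤ p k) (hq : ∀ k ∈ t, 0 ≤ q k) (hpq : ∑ k ∈ t, p k = ∑ k ∈ t, q k) :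
    dist (∑ k ∈ t, p k • b k) (∑ k ∈ t, q k • b k) ≤ (∑ k ∈ t, p k) * diam S := by
  rcases (sum_nonneg hp).eq_or_lt' with hp_sum | hp_pos
  · have hp_zero : ∀ k ∈ t, p k = 0 := (sum_eq_zero_iff_of_nonneg hp).1 hp_sum
    have hq_zero : ∀ k ∈ t, q k = 0 := (sum_eq_zero_iff_of_nonneg hq).1 (hpq ▸ hp_sum)
    have sum_smul_eq_zero {w : κ → ℝ} (hw : ∀ k ∈ t, w k = 0) : ∑ k ∈ t, w k • b k = 0 :=
      sum_eq_zero fun k hk => by rw [hw k hk, zero_smul]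
    rw [sum_smul_eq_zero hp_zero, sum_smul_eq_zero hq_zero, hp_sum, dist_self, zero_mul]
  · have hq_pos : 0 < ∑ k ∈ t, q k := hpq ▸ hp_pos
    have sum_smul_eq {w : κ → ℝ} (hw : 0 < ∑ k ∈ t, w k) :
        ∑ k ∈ t, w k • b k = (∑ k ∈ t, w k) • t.centerMass w b :=
      (smul_inv_smul₀ hw.ne' _).symm
    calc dist (∑ k ∈ t, p k • b k) (∑ k ∈ t, q k • b k)
        = (∑ k ∈ t, p k) * dist (t.centerMass p b) (t.centerMass q b) := by
          rw [sum_smul_eq hp_pos, sum_smul_eq hq_pos, ← hpq, dist_smul₀,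
            Real.norm_of_nonneg hp_pos.le]
      _ ≤ (∑ k ∈ t, p k) * diam (convexHull ℝ S) := by
          gcongr
          exact dist_le_diam_of_mem (isBounded_convexHull.2 hS)
            (t.centerMass_mem_convexHull hp hp_pos hb) (t.centerMass_mem_convexHull hq hq_pos hb)
      _ = (∑ k ∈ t, p k) * diam S := by rw [convexHull_diam]

lemma dist_sum_smul_le_of_sum_eq (hS : IsBounded S) (hb : ∀ k ∈ t, b k ∈ S)
    (hpq : ∑ k ∈ t, p k = ∑ k ∈ t, q k) :
    dist (∑ k ∈ t, p k • b k) (∑ k ∈ t, q k • b k) ≤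
      (∑ k ∈ t, p k - ∑ k ∈ t, min (p k) (q k)) * diam S := by
  have h := dist_sum_smul_le_of_nonneg (p := fun k => p k - min (p k) (q k))
    (q := fun k => q k - min (p k) (q k)) hS hb
    (fun k _ => sub_nonneg.2 (min_le_left _ _)) (fun k _ => sub_nonneg.2 (min_le_right _ _))
    (by rw [sum_sub_distrib, sum_sub_distrib, hpq])
  simpa only [sub_smul, sum_sub_distrib, dist_sub_right] using h

theorem rowDiam_mul_le_general {ι : Type*} [Finite ι] [Nonempty ι] [Fintype κ]
    (A : Matrix ι κ ℝ) (b : κ → E) {s : ℝ} (hA : ∀ i, ∑ k, A i k = s) :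
    diam (Set.range fun i => ∑ k, A i k • b k) ≤
      (s - ⨅ (i : ι) (j : ι), ∑ k, min (A i k) (A j k)) * diam (Set.range b) := by
  refine diam_le_of_forall_dist_le_of_nonempty (Set.range_nonempty _) ?_
  rintro _ ⟨i, rfl⟩ _ ⟨j, rfl⟩
  calc dist (∑ k, A i k • b k) (∑ k, A j k • b k)
      ≤ (∑ k, A i k - ∑ k, min (A i k) (A j k)) * diam (Set.range b) :=
        dist_sum_smul_le_of_sum_eq (Set.finite_range b).isBounded
          (fun k _ => Set.mem_range_self k) ((hA i).trans (hA j).symm)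
    _ ≤ (s - ⨅ (i : ι) (j : ι), ∑ k, min (A i k) (A j k)) * diam (Set.range b) := by
        rw [hA i]
        gcongr
        exact Finite.ciInf_le_of_le i
          (Finite.ciInf_le (fun j => ∑ k, min (A i k) (A j k)) j)

end Diam

lemma rowDiam_eq_diam {n : ℕ} (M : Matrix (Fin n) (Fin n) ℝ) :
    rowDiam M = Metric.diam (Set.range fun i => WithLp.toLp 2 (M i)) := by
  simp only [rowDiam, diam_range_eq_iSup_iSup_dist (Set.finite_range _).isBounded,
    EuclideanSpace.dist_eq, Real.dist_eq, sq_abs]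

lemma toLp_mul_row {R l m n : Type*} [Ring R] [Fintype m] (p : ENNReal)
    (A : Matrix l m R) (B : Matrix m n R) (i : l) :
    WithLp.toLp p ((A * B) i) = ∑ k, A i k • WithLp.toLp p (B k) := by
  ext j
  simp [Matrix.mul_apply]

/-- **Shrinking lemma.** Multiplication from the left by a row-stochastic matrix `A`
shrinks the row-diameter by the factor `1 - min_{i,j} Σ_k min{A_{ik}, A_{jk}}`. -/
theorem rowDiam_mul_le
    (n : ℕ) (A B : Matrix (Fin n) (Fin n) ℝ)
    (hAnonneg : ∀ i j, 0 ≤ A i j) (hAstoch : ∀ i, ∑ j, A i j = 1) :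
    rowDiam (A * B) ≤
      (1 - ⨅ (i : Fin n) (j : Fin n), ∑ k, min (A i k) (A j k)) * rowDiam B := by
  rcases isEmpty_or_nonempty (Fin n)
  · simp only [rowDiam, Real.iSup_of_isEmpty, mul_zero, le_refl]
  · simpa only [rowDiam_eq_diam, toLp_mul_row] using
      rowDiam_mul_le_general A (fun k => WithLp.toLp 2 (B k)) hAstoch
end

section
/- Let (A(t))_{t∈ℕ} be a sequence of row-stochastic nonnegative n×n matrices and let A(0,t) := A(t−1)···A(0) be the backward products. If the row-diameter d(A(0,t)) (the maximum Euclidean distance between two rows of A(0,t)) tends to 0 as t → ∞, then A(0,t) converges to a consensus matrix K, i.e., a row-stochastic matrix all of whose rows are equal. -/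
open Matrix Filter Finset

/-!
Each row of `A(0,t+1) = A(t) A(0,t)` is a convex combination of the rows of `A(0,t)`, so the convex
hulls of the rows form a decreasing sequence of sets. A convex hull has the same diameter as the
points spanning it, so by Cantor's intersection theorem the hulls shrink to a single point, to
which every row converges. This point is a probability vector because all rows are.
-/

open Bornology Topology

theorem exists_tendsto_of_antitone_of_tendsto_diam_zero {X : Type*} [PseudoMetricSpace X]
    [CompleteSpace X] [Nonempty X] {S : ℕ → Set X} (hanti : Antitone S) (hbdd : IsBounded (S 0))
    (hdiam : Tendsto (fun t ↦ Metric.diam (S t)) atTop (𝓝 0)) :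
    ∃ c, ∀ u : ℕ → X, (∀ t, u t ∈ S t) → Tendsto u atTop (𝓝 c) := by
  by_cases hne : ∀ t, (S t).Nonempty
  · have hbdd' (t : ℕ) : IsBounded (closure (S t)) := (hbdd.subset (hanti t.zero_le)).closure
    obtain ⟨c, hc⟩ : (⋂ t, closure (S t)).Nonempty := by
      refine Metric.nonempty_iInter_of_nonempty_biInter (fun _ ↦ isClosed_closure) hbdd'
        (fun N ↦ (hne N).mono ?_) (by simpa only [Metric.diam_closure] using hdiam)
      exact Set.subset_iInter₂ fun t ht ↦ (hanti ht).trans subset_closure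
    refine ⟨c, fun u hu ↦ tendsto_iff_dist_tendsto_zero.2 ?_⟩
    refine squeeze_zero (fun _ ↦ dist_nonneg) (fun t ↦ ?_) hdiam
    rw [← Metric.diam_closure]
    exact Metric.dist_le_diam_of_mem (hbdd' t) (subset_closure (hu t)) (Set.mem_iInter.1 hc t)
  · obtain ⟨t, ht⟩ := not_forall.1 hne
    exact ⟨Classical.arbitrary X, fun u hu ↦ absurd ⟨u t, hu t⟩ ht⟩

theorem vecMul_mem_convexHull_range_row {R m n : Type*} [Field R] [LinearOrder R]
    [IsStrictOrderedRing R] [Fintype m] {w : m → R} (hw : w ∈ stdSimplex R m)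
    (M : Matrix m n R) : w ᵥ* M ∈ convexHull R (Set.range M.row) := by
  rw [vecMul_eq_sum]
  exact (convex_convexHull R _).sum_mem (fun i _ ↦ hw.1 i) hw.2
    fun i _ ↦ subset_convexHull R _ (Set.mem_range_self i)

theorem dist_row_le_rowDiam {n : ℕ} (M : Matrix (Fin n) (Fin n) ℝ) (i j : Fin n) :
    dist (M.row i) (M.row j) ≤ rowDiam M :=
  calc dist (M.row i) (M.row j)
      ≤ √(∑ k, (M i k - M j k) ^ 2) :=
        (dist_pi_le_iff (Real.sqrt_nonneg _)).2 fun k ↦ Real.abs_le_sqrt <|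
          single_le_sum (f := fun k ↦ (M i k - M j k) ^ 2) (fun _ _ ↦ sq_nonneg _) (mem_univ k)
    _ ≤ ⨆ j, √(∑ k, (M i k - M j k) ^ 2) :=
        le_ciSup (f := fun j ↦ √(∑ k, (M i k - M j k) ^ 2)) (Set.finite_range _).bddAbove j
    _ ≤ rowDiam M :=
        le_ciSup (f := fun i ↦ ⨆ j, √(∑ k, (M i k - M j k) ^ 2)) (Set.finite_range _).bddAbove i

theorem rowDiam_nonneg {n : ℕ} (M : Matrix (Fin n) (Fin n) ℝ) : 0 ≤ rowDiam M :=
  Real.iSup_nonneg fun _ ↦ Real.iSup_nonneg fun _ ↦ Real.sqrt_nonneg _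

-- The diameter is measured in the sup metric of `Fin n → ℝ`, which is below the Euclidean one.
theorem diam_convexHull_range_row_le_rowDiam {n : ℕ} (M : Matrix (Fin n) (Fin n) ℝ) :
    Metric.diam (convexHull ℝ (Set.range M.row)) ≤ rowDiam M := by
  rw [convexHull_diam]
  exact Metric.diam_le_of_forall_dist_le (rowDiam_nonneg M) <|
    Set.forall_mem_range.2 fun i ↦ Set.forall_mem_range.2 fun j ↦ dist_row_le_rowDiam M i j

section backProd

variable {n : ℕ} {A : ℕ → Matrix (Fin n) (Fin n) ℝ}

theorem antitone_convexHull_range_row_backProd (hA : ∀ t, RowStochastic (A t)) :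
    Antitone fun t ↦ convexHull ℝ (Set.range (backProd A t).row) := by
  refine antitone_nat_of_succ_le fun t ↦ convexHull_min ?_ (convex_convexHull ℝ _)
  rintro _ ⟨i, rfl⟩
  have hrow : A t i ∈ stdSimplex ℝ (Fin n) := ⟨(hA t).1 i, (hA t).2 i⟩
  exact vecMul_mem_convexHull_range_row hrow (backProd A t)

theorem row_backProd_mem_stdSimplex (hA : ∀ t, RowStochastic (A t)) (t : ℕ) (i : Fin n) :
    (backProd A t).row i ∈ stdSimplex ℝ (Fin n) := by
  have hzero : Set.range (backProd A 0).row ⊆ stdSimplex ℝ (Fin n) := by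
    rintro _ ⟨j, rfl⟩
    rw [backProd, ← diagonal_one, row_diagonal]
    exact single_mem_stdSimplex ℝ j
  exact convexHull_min hzero (convex_stdSimplex ℝ _) <|
    antitone_convexHull_range_row_backProd hA t.zero_le <|
      subset_convexHull ℝ _ (Set.mem_range_self i)

end backProd

/-- If the row-diameter of the backward products of row-stochastic matrices tends to zero,
then the backward products converge to a consensus matrix. -/
theorem consensus_of_rowDiam_tendsto_zero
    (n : ℕ) (A : ℕ → Matrix (Fin n) (Fin n) ℝ)
    (hstoch : ∀ t, RowStochastic (A t))
    (hdiam : Tendsto (fun t => rowDiam (backProd A t)) atTop (nhds 0)) :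
    ∃ K : Matrix (Fin n) (Fin n) ℝ,
      RowStochastic K ∧ (∀ i j : Fin n, K i = K j) ∧
      Tendsto (fun t => backProd A t) atTop (nhds K) := by
  obtain ⟨c, hc⟩ := exists_tendsto_of_antitone_of_tendsto_diam_zero
    (antitone_convexHull_range_row_backProd hstoch)
    (isBounded_convexHull.2 (Set.finite_range _).isBounded)
    (squeeze_zero (fun _ ↦ Metric.diam_nonneg)
      (fun t ↦ diam_convexHull_range_row_le_rowDiam (backProd A t)) hdiam)
  have hrow (i : Fin n) : Tendsto (fun t ↦ (backProd A t).row i) atTop (𝓝 c) :=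
    hc _ fun _ ↦ subset_convexHull ℝ _ (Set.mem_range_self i)
  have hsimplex (i : Fin n) : c ∈ stdSimplex ℝ (Fin n) :=
    (isClosed_stdSimplex ℝ (Fin n)).mem_of_tendsto (hrow i) <|
      .of_forall fun t ↦ row_backProd_mem_stdSimplex hstoch t i
  exact ⟨of fun _ ↦ c, ⟨fun i ↦ (hsimplex i).1, fun i ↦ (hsimplex i).2⟩, fun _ _ ↦ rfl,
    tendsto_pi_nhds.2 hrow⟩
end

section
/- Fix ε > 0 and n ≥ 1. For any initial opinion profile X(0) ∈ ℝⁿ, define the Hegselmann–Krause dynamics by X(t+1) = A(X(t))·X(t), where A(X)_{ij} = 1/|I(i,X)| if |X_i − X_j| ≤ ε (with I(i,X) := { j : |X_i − X_j| ≤ ε }) and A(X)_{ij} = 0 otherwise. Then the sequence (X(t))_{t∈ℕ} converges to a limit X(∞) ∈ ℝⁿ, and there exist a time step t₀ and a partition I₁,…,I_p of {1,…,n} such that X(∞)_i = X(∞)_j whenever i and j lie in the same class I_l. -/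
open Matrix Filter Finset

/-- The Hegselmann–Krause confidence matrix with confidence bound `ε` at profile `X`:
agent `i` gives equal weight to every agent `j` with `|X i - X j| ≤ ε`. -/
noncomputable def hkMatrix {n : ℕ} (ε : ℝ) (X : Fin n → ℝ) : Matrix (Fin n) (Fin n) ℝ :=
  fun i j =>
    if |X i - X j| ≤ ε then
      (1 : ℝ) / (Finset.univ.filter fun k : Fin n => |X i - X k| ≤ ε).card
    else 0

/-!
Confidence is symmetric and each agent moves to the mean of its neighbourhood. These two facts make
the energy `∑ i, ∑ j, min ((x i - x j) ^ 2) (ε ^ 2)` drop by at least four times the squared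
displacement in every step, so displacements tend to `0`. When all displacements are small, scanning
the agents from left to right shows that any two neighbours are within `ε / 2` of each other, so
that being neighbours is transitive and neighbours share their next opinion. If the following
displacements are small too, agents that become neighbours were neighbours already. From then on
agents either agree or are more than `ε` apart, and nobody moves again.
-/

namespace HegselmannKrause

theorem tendsto_sub_succ_of_antitone {α : Type*} [ConditionallyCompleteLinearOrder α]
    [TopologicalSpace α] [OrderTopology α] [AddGroup α] [ContinuousSub α] {u : ℕ → α}
    (hu : Antitone u) (hbdd : BddBelow (Set.range u)) :
    Tendsto (fun t ↦ u t - u (t + 1)) atTop (nhds 0) := by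
  have hlim := tendsto_atTop_ciInf hu hbdd
  simpa only [sub_self, Function.comp_apply] using hlim.sub (hlim.comp (tendsto_add_atTop_nat 1))

theorem le_card_mul_of_sum_le {α R : Type*} [CommRing R] [LinearOrder R]
    [IsStrictOrderedRing R] {s : Finset α} {f : α → R} {η : R}
    (hlow : ∀ i ∈ s, -η ≤ f i) (hsum : ∑ i ∈ s, f i ≤ η) {j : α} (hj : j ∈ s) :
    f j ≤ #s * η := by
  classical
  have hrest : (#(s.erase j) : R) * -η ≤ ∑ i ∈ s.erase j, f i := by
    simpa only [nsmul_eq_mul] using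
      card_nsmul_le_sum _ f (-η) fun i hi ↦ hlow i (mem_of_mem_erase hi)
  have hcard : (#(s.erase j) : R) + 1 = #s := mod_cast card_erase_add_one hj
  rw [← hcard]
  linarith [add_sum_erase s f hj]

theorem exists_fin_partition_fibers {ι α : Type*} [Finite ι] (f : ι → α) :
    ∃ (p : ℕ) (I : Fin p → Finset ι),
      (∀ l, (I l).Nonempty) ∧
      (∀ l m, l ≠ m → Disjoint (I l) (I m)) ∧
      (∀ i, ∃ l, i ∈ I l) ∧
      ∀ l, ∀ i ∈ I l, ∀ j, j ∈ I l ↔ f i = f j := by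
  classical
  have := Fintype.ofFinite ι
  let e := (univ.image f).equivFin
  have hmem (i : ι) : f i ∈ univ.image f := mem_image_of_mem f (mem_univ i)
  let cls (i : ι) := e ⟨f i, hmem i⟩
  have hcls (i j : ι) : cls i = cls j ↔ f i = f j := by
    simp only [cls, EmbeddingLike.apply_eq_iff_eq, Subtype.mk.injEq]
  refine ⟨_, fun l ↦ {i | cls i = l}, fun l ↦ ?_, fun l m hlm ↦ ?_, fun i ↦ ⟨cls i, ?_⟩,
    fun l i hi j ↦ ?_⟩
  · obtain ⟨i, -, hi⟩ := mem_image.1 (e.symm l).2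
    exact ⟨i, by simp [cls, hi]⟩
  · exact disjoint_filter.2 fun i _ hl hm ↦ hlm (hl.symm.trans hm)
  · simp
  · obtain rfl : cls i = l := by simpa using hi
    rw [mem_filter_univ, ← hcls, eq_comm]

/-- A profile is clustered if any two agents within the confidence bound agree. -/
def IsClustered {ι : Type*} (ε : ℝ) (x : ι → ℝ) : Prop := ∀ i j, |x i - x j| ≤ ε → x i = x j

section Fintype

variable {ι : Type*} [Fintype ι]

theorem sum_sum_sq_sub_sq_eq {R : Type*} [CommRing R] {N : ι → Finset ι}
    (hsymm : ∀ i j, j ∈ N i ↔ i ∈ N j) {x y : ι → R}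
    (hy : ∀ i, ∑ j ∈ N i, (x j - y i) = 0) :
    ∑ i, ∑ j ∈ N i, ((x i - x j) ^ 2 - (y i - y j) ^ 2) =
      ∑ i, ∑ j ∈ N i, ((y i - x i) + (y j - x j)) ^ 2 := by
  have hleft : ∑ i, ∑ j ∈ N i, 2 * (y i - x i) * (x j - y i) = 0 :=
    sum_eq_zero fun i _ ↦ by rw [← mul_sum, hy, mul_zero]
  have hright : ∑ i, ∑ j ∈ N i, 2 * (y j - x j) * (x i - y j) = 0 := by
    rw [sum_comm' (t' := univ) (s' := N) fun i j ↦ by simp [hsymm i j]]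
    exact hleft
  calc
    _ = ∑ i, ∑ j ∈ N i, (((y i - x i) + (y j - x j)) ^ 2 +
          2 * (y i - x i) * (x j - y i) + 2 * (y j - x j) * (x i - y j)) :=
      sum_congr rfl fun i _ ↦ sum_congr rfl fun j _ ↦ by ring
    _ = _ := by simp only [sum_add_distrib, hleft, hright, add_zero]

/-- The set `I(i, x)` of the agents whose opinions agent `i` takes into account. -/
noncomputable def neighbors (ε : ℝ) (x : ι → ℝ) (i : ι) : Finset ι := {j | |x i - x j| ≤ ε}

/-- One step of the Hegselmann–Krause dynamics, for agents indexed by any finite type. The mean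
of an empty neighbourhood, which occurs only for `ε < 0`, is `0`. -/
noncomputable def step (ε : ℝ) (x : ι → ℝ) (i : ι) : ℝ := (neighbors ε x i).expect x

/-- The Lyapunov function of the dynamics. Truncating the squared distances at `ε ^ 2` keeps pairs
of agents outside each other's confidence range from raising it. -/
noncomputable def energy (ε : ℝ) (x : ι → ℝ) : ℝ := ∑ i, ∑ j, min ((x i - x j) ^ 2) (ε ^ 2)

variable {ε : ℝ} {x : ι → ℝ} {i j : ι}

@[simp]
theorem mem_neighbors : j ∈ neighbors ε x i ↔ |x i - x j| ≤ ε := mem_filter_univ j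

theorem mem_neighbors_comm : j ∈ neighbors ε x i ↔ i ∈ neighbors ε x j := by
  rw [mem_neighbors, mem_neighbors, abs_sub_comm]

theorem self_mem_neighbors (hε : 0 ≤ ε) (x : ι → ℝ) (i : ι) : i ∈ neighbors ε x i := by
  simpa using hε

theorem hkMatrix_mulVec {n : ℕ} (ε : ℝ) (x : Fin n → ℝ) : hkMatrix ε x *ᵥ x = step ε x := by
  ext i
  simp only [mulVec, dotProduct, hkMatrix, step, neighbors, expect_eq_sum_div_card, ite_mul,
    zero_mul, sum_ite, sum_const_zero, add_zero, sum_div]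
  exact sum_congr rfl fun j _ ↦ one_div_mul_eq_div _ _

theorem sum_neighbors_sub (ε : ℝ) (x : ι → ℝ) (i : ι) (c : ℝ) :
    ∑ j ∈ neighbors ε x i, (x j - c) = #(neighbors ε x i) * (step ε x i - c) := by
  rw [sum_sub_distrib, sum_const, mul_sub, step, ← nsmul_eq_mul, ← nsmul_eq_mul, card_smul_expect]

theorem sum_neighbors_sub_step (ε : ℝ) (x : ι → ℝ) (i : ι) :
    ∑ j ∈ neighbors ε x i, (x j - step ε x i) = 0 := by
  rw [sum_neighbors_sub, sub_self, mul_zero]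

theorem energy_nonneg (ε : ℝ) (x : ι → ℝ) : 0 ≤ energy ε x :=
  sum_nonneg fun _ _ ↦ sum_nonneg fun _ _ ↦ le_min (sq_nonneg _) (sq_nonneg _)

theorem sum_neighbors_sq_sub_sq_le_energy_sub (hε : 0 ≤ ε) (x y : ι → ℝ) :
    ∑ i, ∑ j ∈ neighbors ε x i, ((x i - x j) ^ 2 - (y i - y j) ^ 2) ≤
      energy ε x - energy ε y := by
  simp only [energy, neighbors, sum_filter, ← sum_sub_distrib]
  gcongr with i _ j _
  split_ifs with h
  · have hsq : (x i - x j) ^ 2 ≤ ε ^ 2 := sq_le_sq.2 (by rwa [abs_of_nonneg hε])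
    rw [min_eq_left hsq]
    gcongr
    exact min_le_left _ _
  · have hsq : ε ^ 2 ≤ (x i - x j) ^ 2 := 
      sq_le_sq.2 (by rw [abs_of_nonneg hε]; exact (not_le.1 h).le)
    rw [min_eq_right hsq, sub_nonneg]
    exact min_le_right _ _

theorem four_mul_sum_sq_le_energy_sub (hε : 0 ≤ ε) (x : ι → ℝ) :
    4 * ∑ i, (step ε x i - x i) ^ 2 ≤ energy ε x - energy ε (step ε x) := by
  let v i := step ε x i - x i
  calc
    4 * ∑ i, v i ^ 2 = ∑ i, (v i + v i) ^ 2 := by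
      rw [mul_sum]
      exact sum_congr rfl fun i _ ↦ by ring
    _ ≤ ∑ i, ∑ j ∈ neighbors ε x i, (v i + v j) ^ 2 :=
      sum_le_sum fun i _ ↦ single_le_sum (f := fun j ↦ (v i + v j) ^ 2)
        (fun j _ ↦ sq_nonneg _) (self_mem_neighbors hε x i)
    _ = ∑ i, ∑ j ∈ neighbors ε x i, ((x i - x j) ^ 2 - (step ε x i - step ε x j) ^ 2) :=
      (sum_sum_sq_sub_sq_eq (fun _ _ ↦ mem_neighbors_comm) (sum_neighbors_sub_step ε x)).symm
    _ ≤ energy ε x - energy ε (step ε x) := sum_neighbors_sq_sub_sq_le_energy_sub hε x _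

theorem tendsto_step_sub (hε : 0 ≤ ε) {X : ℕ → ι → ℝ} (hX : ∀ t, X (t + 1) = step ε (X t)) :
    Tendsto (fun t ↦ step ε (X t) - X t) atTop (nhds 0) := by
  have hdrop (t : ℕ) :
      4 * ∑ i, (step ε (X t) i - X t i) ^ 2 ≤ energy ε (X t) - energy ε (X (t + 1)) :=
    hX t ▸ four_mul_sum_sq_le_energy_sub hε (X t)
  have hsq_nonneg (t : ℕ) : 0 ≤ ∑ i, (step ε (X t) i - X t i) ^ 2 :=
    sum_nonneg fun i _ ↦ sq_nonneg _
  have hanti : Antitone fun t ↦ energy ε (X t) :=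
    antitone_nat_of_succ_le fun t ↦ by linarith [hdrop t, hsq_nonneg t]
  have hbdd : BddBelow (Set.range fun t ↦ energy ε (X t)) :=
    ⟨0, Set.forall_mem_range.2 fun t ↦ energy_nonneg ε (X t)⟩
  have hsqrt : Tendsto (fun t ↦ √(energy ε (X t) - energy ε (X (t + 1)))) atTop (nhds 0) := by
    simpa only [Real.sqrt_zero] using (tendsto_sub_succ_of_antitone hanti hbdd).sqrt
  refine tendsto_pi_nhds.2 fun i ↦ squeeze_zero_norm (fun t ↦ Real.abs_le_sqrt ?_) hsqrt
  have hi := single_le_sum (f := fun i ↦ (step ε (X t) i - X t i) ^ 2)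
    (fun i _ ↦ sq_nonneg _) (mem_univ i)
  simp only [Pi.sub_apply]
  linarith [hdrop t, hsq_nonneg t]

theorem sub_le_of_sum_neighbors_le {η : ℝ} (hη : 0 ≤ η) (hηε : 2 * (Fintype.card ι * η) ≤ ε)
    (hsum : ∀ i, ∑ j ∈ neighbors ε x i, (x j - x i) ≤ η) (k : ι) :
    ∀ j ∈ neighbors ε x k, x j - x k ≤ Fintype.card ι * η := by
  have hcη : 0 ≤ Fintype.card ι * η := by positivity
  have hε : 0 ≤ ε := by linarith
  -- Induct from left to right: the leftmost neighbour `l` of `k` has no neighbour on its left, so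
  -- `k` is within `η` of `l`, and no neighbour of `k` lies more than `η` to the left of `k`.
  induction k using (Finite.wellFounded_of_trans_of_irrefl fun i j ↦ x i < x j).induction with
  | _ k ih =>
  obtain ⟨l, hl, hmin⟩ := exists_min_image _ x ⟨k, self_mem_neighbors hε x k⟩
  have hlk : x l ≤ x k := hmin k (self_mem_neighbors hε x k)
  have hlk_le : x k - x l ≤ Fintype.card ι * η := by
    rcases hlk.lt_or_eq with h | h
    · exact ih l h k (mem_neighbors_comm.1 hl)
    · rwa [h, sub_self]
  have hleft : ∀ m ∈ neighbors ε x l, x l ≤ x m := by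
    intro m hm
    by_contra! hml
    have hml_le := ih m (hml.trans_le hlk) l (mem_neighbors_comm.1 hm)
    have hmk : m ∈ neighbors ε x k := mem_neighbors.2 (abs_le.2 ⟨by linarith, by linarith⟩)
    exact (hmin m hmk).not_gt hml
  have hkl : x k - x l ≤ η :=
    (single_le_sum (f := fun m ↦ x m - x l) (fun m hm ↦ sub_nonneg.2 (hleft m hm))
      (mem_neighbors_comm.1 hl)).trans (hsum l)
  intro j hj
  calc
    x j - x k ≤ #(neighbors ε x k) * η :=
      le_card_mul_of_sum_le (f := fun m ↦ x m - x k)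
        (fun m hm ↦ by linarith [hmin m hm]) (hsum k) hj
    _ ≤ Fintype.card ι * η := by gcongr; exact card_le_univ _

theorem abs_sub_le_half_of_mem_neighbors {δ : ℝ} (hδε : 2 * Fintype.card ι ^ 2 * δ ≤ ε)
    (hsmall : ∀ i, |step ε x i - x i| ≤ δ) (hij : j ∈ neighbors ε x i) :
    |x i - x j| ≤ ε / 2 := by
  have hδ : 0 ≤ δ := (abs_nonneg _).trans (hsmall i)
  have hsum (k : ι) : ∑ m ∈ neighbors ε x k, (x m - x k) ≤ Fintype.card ι * δ := by
    calc
      _ = #(neighbors ε x k) * (step ε x k - x k) := sum_neighbors_sub ..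
      _ ≤ #(neighbors ε x k) * δ := by gcongr; exact (abs_le.1 (hsmall k)).2
      _ ≤ Fintype.card ι * δ := by gcongr; exact card_le_univ _
  have hsub := sub_le_of_sum_neighbors_le (by positivity) (by linarith) hsum
  have hright := hsub i j hij
  have hleft := hsub j i (mem_neighbors_comm.1 hij)
  exact abs_le.2 ⟨by linarith, by linarith⟩

theorem step_eq_step_of_mem_neighbors
    (hhalf : ∀ i, ∀ j ∈ neighbors ε x i, |x i - x j| ≤ ε / 2) (hij : j ∈ neighbors ε x i) :
    step ε x i = step ε x j := by
  have hsub {i j : ι} (hij : j ∈ neighbors ε x i) : neighbors ε x j ⊆ neighbors ε x i :=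
    fun k hk ↦ mem_neighbors.2 <|
      (abs_sub_le _ (x j) _).trans (by linarith [hhalf i j hij, hhalf j k hk])
  rw [step, step, (hsub (mem_neighbors_comm.1 hij)).antisymm (hsub hij)]

theorem isClustered_step {δ : ℝ} (hδε : 4 * Fintype.card ι ^ 2 * δ ≤ ε)
    (hx : ∀ i, |step ε x i - x i| ≤ δ)
    (hstep : ∀ i, |step ε (step ε x) i - step ε x i| ≤ δ) : IsClustered ε (step ε x) := by
  intro i j hij
  have hδ : 0 ≤ δ := (abs_nonneg _).trans (hx i)
  have hcδ : 0 ≤ (Fintype.card ι : ℝ) ^ 2 * δ := by positivity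
  have hδ_quarter : 4 * δ ≤ ε := by
    have hcard : (1 : ℝ) ≤ Fintype.card ι := mod_cast Fintype.card_pos_iff.2 ⟨i⟩
    nlinarith [le_mul_of_one_le_left hδ (one_le_pow₀ (n := 2) hcard)]
  have hδ_half : 2 * Fintype.card ι ^ 2 * δ ≤ ε := by linarith
  have hij_half : |step ε x i - step ε x j| ≤ ε / 2 :=
    abs_sub_le_half_of_mem_neighbors hδ_half hstep (mem_neighbors.2 hij)
  have hij_before : j ∈ neighbors ε x i := by
    have hi := abs_le.1 (hx i)
    have hj := abs_le.1 (hx j)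
    have hnext := abs_le.1 hij_half
    exact mem_neighbors.2 (abs_le.2 ⟨by linarith, by linarith⟩)
  exact step_eq_step_of_mem_neighbors
    (fun _ _ ↦ abs_sub_le_half_of_mem_neighbors hδ_half hx) hij_before

theorem IsClustered.step_eq (hx : IsClustered ε x) (hε : 0 ≤ ε) : step ε x = x := by
  ext i
  rw [step, expect_congr rfl fun j hj ↦ (hx i j (mem_neighbors.1 hj)).symm,
    expect_const ⟨i, self_mem_neighbors hε x i⟩]

theorem exists_isClustered (hε : 0 < ε) {X : ℕ → ι → ℝ} (hX : ∀ t, X (t + 1) = step ε (X t)) :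
    ∃ t, IsClustered ε (X t) := by
  let δ := ε / (4 * Fintype.card ι ^ 2 + 1)
  have hδ : 0 < δ := by positivity
  have hδε : 4 * Fintype.card ι ^ 2 * δ ≤ ε := by
    have : (4 * Fintype.card ι ^ 2 + 1) * δ = ε := mul_div_cancel₀ _ (by positivity)
    linarith
  have hsmall : ∀ᶠ t in atTop, ∀ i, |step ε (X t) i - X t i| ≤ δ := by
    filter_upwards [(tendsto_step_sub hε.le hX).eventually (Metric.closedBall_mem_nhds 0 hδ)]
      with t ht i
    simpa using (norm_le_pi_norm _ i).trans (mem_closedBall_zero_iff.1 ht)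
  obtain ⟨T, hT⟩ := eventually_atTop.1 hsmall
  refine ⟨T + 1, hX T ▸ isClustered_step hδε (hT T le_rfl) ?_⟩
  simpa only [hX T] using hT (T + 1) T.le_succ

theorem IsClustered.eq_of_le (hε : 0 ≤ ε) {X : ℕ → ι → ℝ} (hX : ∀ t, X (t + 1) = step ε (X t))
    {t₀ t : ℕ} (hclus : IsClustered ε (X t₀)) (ht : t₀ ≤ t) : X t = X t₀ := by
  induction t, ht using Nat.le_induction with
  | base => rfl
  | succ t _ ih => rw [hX, ih, hclus.step_eq hε]

end Fintype

end HegselmannKrause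

open HegselmannKrause in
theorem hk_dynamics_converge_general {ι : Type*} [Fintype ι] {ε : ℝ} (hε : 0 < ε)
    {X : ℕ → ι → ℝ} (hdyn : ∀ t, X (t + 1) = step ε (X t)) :
    ∃ (Xinf : ι → ℝ) (t₀ : ℕ),
      (∀ t ≥ t₀, X t = Xinf) ∧
      ∃ (p : ℕ) (I : Fin p → Finset ι),
        (∀ l, (I l).Nonempty) ∧
        (∀ l m, l ≠ m → Disjoint (I l) (I m)) ∧
        (∀ i, ∃ l, i ∈ I l) ∧
        (∀ l, ∀ i ∈ I l, ∀ j ∈ I l, Xinf i = Xinf j) ∧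
        (∀ l, ∀ i ∈ I l, ∀ j ∉ I l, ε < |Xinf i - Xinf j|) := by
  obtain ⟨t₀, hclus⟩ := exists_isClustered hε hdyn
  obtain ⟨p, I, hne, hdisj, hcover, hfiber⟩ := exists_fin_partition_fibers (X t₀)
  refine ⟨X t₀, t₀, fun t ht ↦ hclus.eq_of_le hε.le hdyn ht, p, I, hne, hdisj, hcover,
    fun l i hi j hj ↦ (hfiber l i hi j).1 hj, fun l i hi j hj ↦ ?_⟩
  by_contra! hij
  exact hj ((hfiber l i hi j).2 (hclus i j hij))

/-- **Convergence of the Hegselmann–Krause dynamics.** The process `X(t+1) = A(X(t))·X(t)`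
converges, and there are a time step `t₀` and a partition `I₁,…,I_p` of the agents such
that agents in the same class have equal limit opinions. -/
theorem hk_dynamics_converge
    (n : ℕ) (hn : 1 ≤ n) (ε : ℝ) (hε : 0 < ε)
    (X : ℕ → Fin n → ℝ)
    (hdyn : ∀ t, X (t + 1) = (hkMatrix ε (X t)).mulVec (X t)) :
    ∃ Xinf : Fin n → ℝ,
      Tendsto X atTop (nhds Xinf) ∧
      ∃ (t₀ : ℕ) (p : ℕ) (I : Fin p → Finset (Fin n)),
        (∀ l, (I l).Nonempty) ∧
        (∀ l m, l ≠ m → Disjoint (I l) (I m)) ∧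
        (∀ i : Fin n, ∃ l, i ∈ I l) ∧
        (∀ l, ∀ i ∈ I l, ∀ j ∈ I l, Xinf i = Xinf j) := by
  obtain ⟨Xinf, t₀, hconst, p, I, hne, hdisj, hcover, hagree, -⟩ :=
    hk_dynamics_converge_general hε fun t ↦
      (hdyn t).trans (HegselmannKrause.hkMatrix_mulVec ε (X t))
  exact ⟨Xinf, tendsto_atTop_of_eventually_const hconst, t₀, p, I, hne, hdisj, hcover, hagree⟩
end

section
/- Fix n ≥ 2, 0 < μ < 1/2, ε > 0, and an arbitrary sequence of pairs of distinct indices (i_t, j_t)_{t∈ℕ}. For any initial opinion profile X(0) ∈ ℝⁿ, define the Weisbuch–Deffuant dynamics by: at time t, if |X(t)_{i_t} − X(t)_{j_t}| ≤ ε, set X(t+1)_{i_t} = X(t)_{i_t} + μ·(X(t)_{j_t} − X(t)_{i_t}) and X(t+1)_{j_t} = X(t)_{j_t} + μ·(X(t)_{i_t} − X(t)_{j_t}), leaving all other coordinates unchanged; otherwise X(t+1) = X(t). Then the sequence (X(t))_{t∈ℕ} converges to a limit in ℝⁿ. -/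
open Filter

/-!
Every opinion update multiplies the profile by a doubly stochastic matrix whose diagonal entries
are bounded below. Products of such matrices converge as soon as every real trajectory
`x (t + 1) = A t *ᵥ x t` does.

By Jensen's inequality, `∑ k, f (x t k)` is antitone in `t` for every convex `f`. Taking
`f = (· ^ 2)` shows that the steps `x (t + 1) - x t` tend to zero, and taking
`f = |· - c|` shows that all limit points `y` of the bounded sequence `x` share the same function
`c ↦ ∑ k, |y k - c|`. The kinks of this function are exactly the coordinates of `y`, so no
coordinate of `x t` accumulates outside the finite set of coordinates of a single limit point.
A bounded real sequence with vanishing steps cannot keep jumping across the gaps of a finite set,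
so every coordinate converges.
-/

open Matrix Set Topology

theorem eventually_lt_or_eventually_gt_of_eventually_le_abs_sub {u : ℕ → ℝ} {c δ : ℝ}
    (hstep : Tendsto (fun t => u (t + 1) - u t) atTop (𝓝 0)) (hδ : 0 < δ)
    (haway : ∀ᶠ t in atTop, δ ≤ |u t - c|) :
    (∀ᶠ t in atTop, u t < c) ∨ ∀ᶠ t in atTop, c < u t := by
  obtain ⟨N, hN⟩ := eventually_atTop.1 (haway.and (hstep.eventually_lt_const hδ))
  by_cases hright : ∀ t ≥ N, c < u t
  · exact .inr (eventually_atTop.2 ⟨N, hright⟩)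
  push Not at hright
  obtain ⟨s, hNs, hs⟩ := hright
  have stays_left : ∀ t ≥ s, u t ≤ c := by
    intro t ht
    induction t, ht using Nat.le_induction with
    | base => exact hs
    | succ t hst ih =>
      have ⟨hgap, hsmall⟩ := hN t (hNs.trans hst)
      rw [abs_of_nonpos (sub_nonpos.2 ih)] at hgap
      linarith
  refine .inl (eventually_atTop.2 ⟨s, fun t ht => (stays_left t ht).lt_of_ne fun heq => ?_⟩)
  have hgap := (hN t (hNs.trans ht)).1
  rw [heq, sub_self, abs_zero] at hgap
  exact hδ.not_ge hgap

theorem exists_tendsto_of_tendsto_sub_zero_of_avoids {u : ℕ → ℝ} {s : Set ℝ}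
    (hbdd : Bornology.IsBounded (range u))
    (hstep : Tendsto (fun t => u (t + 1) - u t) atTop (𝓝 0)) (hs : Dense sᶜ)
    (havoid : ∀ c ∉ s, ∃ δ > 0, ∀ᶠ t in atTop, δ ≤ |u t - c|) :
    ∃ l, Tendsto u atTop (𝓝 l) := by
  refine tendsto_of_no_upcrossings hs ?_ hbdd.bddAbove.isBoundedUnder_of_range
    hbdd.bddBelow.isBoundedUnder_of_range
  rintro a ha b - hab ⟨hlow, hhigh⟩
  obtain ⟨δ, hδ, haway⟩ := havoid a ha
  rcases eventually_lt_or_eventually_gt_of_eventually_le_abs_sub hstep hδ haway with hlt | hgt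
  · obtain ⟨t, hbt, hta⟩ := (hhigh.and_eventually hlt).exists
    exact (hab.trans hbt).not_gt hta
  · obtain ⟨t, hta, hat⟩ := (hlow.and_eventually hgt).exists
    exact hta.not_gt hat

-- The tent function of radius `δ` at `c` is a second difference of `|·|`.
theorem two_mul_max_zero_sub_abs_sub {𝕜 : Type*} [CommRing 𝕜] [LinearOrder 𝕜]
    [IsStrictOrderedRing 𝕜] {δ : 𝕜} (hδ : 0 ≤ δ) (x c : 𝕜) :
    2 * max 0 (δ - |x - c|) = |x - (c + δ)| + |x - (c - δ)| - 2 * |x - c| := by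
  rcases abs_cases (x - c) with h₁ | h₁ <;> rcases abs_cases (x - (c + δ)) with h₂ | h₂ <;>
  rcases abs_cases (x - (c - δ)) with h₃ | h₃ <;>
  rcases max_cases 0 (δ - |x - c|) with h₄ | h₄ <;> linarith

section Profile

variable {ι : Type*} [Fintype ι] {x : ℕ → ι → ℝ} {y : ι → ℝ}

theorem tendsto_sum_max_zero_sub_abs_sub
    (h : ∀ c, Tendsto (fun t => ∑ k, |x t k - c|) atTop (𝓝 (∑ k, |y k - c|)))
    {δ : ℝ} (hδ : 0 ≤ δ) (c : ℝ) :
    Tendsto (fun t => ∑ k, max 0 (δ - |x t k - c|)) atTop (𝓝 (∑ k, max 0 (δ - |y k - c|))) := by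
  have sum_eq (z : ι → ℝ) : ∑ k, max 0 (δ - |z k - c|) =
      (∑ k, |z k - (c + δ)| + ∑ k, |z k - (c - δ)| - 2 * ∑ k, |z k - c|) / 2 := by
    rw [eq_div_iff two_ne_zero, mul_comm, Finset.mul_sum, Finset.mul_sum, ← Finset.sum_add_distrib,
      ← Finset.sum_sub_distrib]
    simp only [two_mul_max_zero_sub_abs_sub hδ]
  simp only [sum_eq]
  exact (((h _).add (h _)).sub ((h c).const_mul 2)).div_const 2

theorem eventually_le_abs_sub_of_tendsto_sum_abs_sub
    (h : ∀ c, Tendsto (fun t => ∑ k, |x t k - c|) atTop (𝓝 (∑ k, |y k - c|)))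
    {c : ℝ} (hc : c ∉ range y) : ∃ δ > 0, ∀ k, ∀ᶠ t in atTop, δ ≤ |x t k - c| := by
  obtain ⟨δ, hδ, hball⟩ := Metric.isOpen_iff.1 (finite_range y).isClosed.isOpen_compl c hc
  have hfar (k : ι) : max 0 (δ - |y k - c|) = 0 :=
    max_eq_left (sub_nonpos.2 (not_lt.1 fun hk => hball (Metric.mem_ball.2 hk) (mem_range_self k)))
  have hzero := tendsto_sum_max_zero_sub_abs_sub h hδ.le c
  simp only [hfar, Finset.sum_const_zero] at hzero
  refine ⟨δ / 2, half_pos hδ, fun k => ?_⟩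
  filter_upwards [hzero.eventually_lt_const (half_pos hδ)] with t ht
  have hk : δ - |x t k - c| ≤ ∑ l, max 0 (δ - |x t l - c|) :=
    (le_max_right 0 _).trans (Finset.single_le_sum (f := fun l => max 0 (δ - |x t l - c|))
      (fun _ _ => le_max_left _ _) (Finset.mem_univ k))
  linarith

end Profile

-- The weighted variance of `v` is at least the contribution of its `k`-th term.
theorem mul_sub_sum_mul_sq_le {ι 𝕜 : Type*} [CommRing 𝕜] [LinearOrder 𝕜] [IsStrictOrderedRing 𝕜]
    {s : Finset ι} {w : ι → 𝕜} (hw : ∀ l ∈ s, 0 ≤ w l) (hw₁ : ∑ l ∈ s, w l = 1)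
    (v : ι → 𝕜) {k : ι} (hk : k ∈ s) :
    w k * (v k - ∑ l ∈ s, w l * v l) ^ 2 ≤
      ∑ l ∈ s, w l * v l ^ 2 - (∑ l ∈ s, w l * v l) ^ 2 := by
  set m := ∑ l ∈ s, w l * v l with hm
  calc w k * (v k - m) ^ 2 ≤ ∑ l ∈ s, w l * (v l - m) ^ 2 :=
        Finset.single_le_sum (f := fun l => w l * (v l - m) ^ 2)
          (fun l hl => mul_nonneg (hw l hl) (sq_nonneg _)) hk
    _ = ∑ l ∈ s, (w l * v l ^ 2 - 2 * m * (w l * v l) + m ^ 2 * w l) :=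
        Finset.sum_congr rfl fun l _ => by ring
    _ = ∑ l ∈ s, w l * v l ^ 2 - 2 * m * m + m ^ 2 * 1 := by
        rw [Finset.sum_add_distrib, Finset.sum_sub_distrib, ← Finset.mul_sum, ← Finset.mul_sum,
          hw₁, ← hm]
    _ = ∑ l ∈ s, w l * v l ^ 2 - m ^ 2 := by ring

section DoublyStochastic

variable {ι : Type*} [Fintype ι] [DecidableEq ι]

theorem sum_comp_mulVec_le_of_mem_doublyStochastic {𝕜 : Type*} [Field 𝕜] [LinearOrder 𝕜]
    [IsStrictOrderedRing 𝕜] {A : Matrix ι ι 𝕜} {s : Set 𝕜} {f : 𝕜 → 𝕜}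
    (hf : ConvexOn 𝕜 s f) (hA : A ∈ doublyStochastic 𝕜 ι) {v : ι → 𝕜} (hv : ∀ k, v k ∈ s) :
    ∑ k, f ((A *ᵥ v) k) ≤ ∑ k, f (v k) := by
  rw [← sum_mulVec_of_mem_doublyStochastic hA (x := fun l => f (v l))]
  exact Finset.sum_le_sum fun k _ => hf.map_sum_le
    (fun _ _ => nonneg_of_mem_doublyStochastic hA) (sum_row_of_mem_doublyStochastic hA k)
    fun l _ => hv l

theorem sum_diag_mul_sub_mulVec_sq_le {𝕜 : Type*} [CommRing 𝕜] [LinearOrder 𝕜]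
    [IsStrictOrderedRing 𝕜] {A : Matrix ι ι 𝕜} (hA : A ∈ doublyStochastic 𝕜 ι) (v : ι → 𝕜) :
    ∑ k, A k k * (v k - (A *ᵥ v) k) ^ 2 ≤ ∑ k, v k ^ 2 - ∑ k, (A *ᵥ v) k ^ 2 := by
  rw [← sum_mulVec_of_mem_doublyStochastic hA (x := fun l => v l ^ 2), ← Finset.sum_sub_distrib]
  exact Finset.sum_le_sum fun k _ => mul_sub_sum_mul_sq_le
    (fun _ _ => nonneg_of_mem_doublyStochastic hA) (sum_row_of_mem_doublyStochastic hA k) v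
    (Finset.mem_univ k)

variable {A : ℕ → Matrix ι ι ℝ} {x : ℕ → ι → ℝ}

theorem antitone_sum_comp_of_mem_doublyStochastic (hA : ∀ t, A t ∈ doublyStochastic ℝ ι)
    (hx : ∀ t, x (t + 1) = A t *ᵥ x t) {f : ℝ → ℝ} (hf : ConvexOn ℝ univ f) :
    Antitone fun t => ∑ k, f (x t k) :=
  antitone_nat_of_succ_le fun t => by
    simpa only [hx] using
      sum_comp_mulVec_le_of_mem_doublyStochastic hf (hA t) fun k => mem_univ (x t k)

theorem isBounded_range_of_mem_doublyStochastic (hA : ∀ t, A t ∈ doublyStochastic ℝ ι)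
    (hx : ∀ t, x (t + 1) = A t *ᵥ x t) : Bornology.IsBounded (range x) := by
  refine isBounded_iff_forall_norm_le.2 ⟨∑ k, |x 0 k|, forall_mem_range.2 fun t => ?_⟩
  refine (pi_norm_le_iff_of_nonneg (Finset.sum_nonneg fun _ _ => abs_nonneg _)).2 fun k => ?_
  calc |x t k| ≤ ∑ l, |x t l| :=
        Finset.single_le_sum (f := fun l => |x t l|) (fun _ _ => abs_nonneg _) (Finset.mem_univ k)
    _ ≤ ∑ l, |x 0 l| :=
        antitone_sum_comp_of_mem_doublyStochastic hA hx (convexOn_norm convex_univ) t.zero_le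

theorem exists_forall_tendsto_sum_comp_of_mem_doublyStochastic
    (hA : ∀ t, A t ∈ doublyStochastic ℝ ι) (hx : ∀ t, x (t + 1) = A t *ᵥ x t) :
    ∃ y : ι → ℝ, ∀ f : ℝ → ℝ, ConvexOn ℝ univ f →
      Tendsto (fun t => ∑ k, f (x t k)) atTop (𝓝 (∑ k, f (y k))) := by
  obtain ⟨y, -, φ, hφ, hy⟩ := tendsto_subseq_of_bounded
    (isBounded_range_of_mem_doublyStochastic hA hx) mem_range_self
  refine ⟨y, fun f hf => ?_⟩
  have hcont : Continuous f := continuousOn_univ.1 (hf.continuousOn isOpen_univ)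
  refine (tendsto_iff_tendsto_subseq_of_antitone
    (antitone_sum_comp_of_mem_doublyStochastic hA hx hf) hφ.tendsto_atTop).2 ?_
  exact tendsto_finsetSum _ fun k _ => (hcont.tendsto _).comp (tendsto_pi_nhds.1 hy k)

theorem tendsto_succ_sub_nhds_zero_of_mem_doublyStochastic (hA : ∀ t, A t ∈ doublyStochastic ℝ ι)
    {d : ℝ} (hd : 0 < d) (hdiag : ∀ t k, d ≤ A t k k) (hx : ∀ t, x (t + 1) = A t *ᵥ x t) (k : ι) :
    Tendsto (fun t => x (t + 1) k - x t k) atTop (𝓝 0) := by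
  obtain ⟨y, hy⟩ := exists_forall_tendsto_sum_comp_of_mem_doublyStochastic hA hx
  have henergy := hy (· ^ 2) even_two.convexOn_pow
  have hdrop : Tendsto (fun t => (∑ l, x t l ^ 2 - ∑ l, x (t + 1) l ^ 2) / d) atTop (𝓝 0) := by
    simpa using (henergy.sub (henergy.comp (tendsto_add_atTop_nat 1))).div_const d
  have hle (t : ℕ) : (x (t + 1) k - x t k) ^ 2 ≤
      (∑ l, x t l ^ 2 - ∑ l, x (t + 1) l ^ 2) / d := by
    rw [le_div_iff₀' hd, hx, sub_sq_comm]
    calc d * (x t k - (A t *ᵥ x t) k) ^ 2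
        ≤ A t k k * (x t k - (A t *ᵥ x t) k) ^ 2 := by gcongr; exact hdiag t k
      _ ≤ ∑ l, A t l l * (x t l - (A t *ᵥ x t) l) ^ 2 :=
          Finset.single_le_sum (f := fun l => A t l l * (x t l - (A t *ᵥ x t) l) ^ 2)
            (fun l _ => mul_nonneg (nonneg_of_mem_doublyStochastic (hA t)) (sq_nonneg _))
            (Finset.mem_univ k)
      _ ≤ _ := sum_diag_mul_sub_mulVec_sq_le (hA t) (x t)
  have hsq := squeeze_zero (fun _ => sq_nonneg _) hle hdrop
  refine (tendsto_zero_iff_abs_tendsto_zero _).2 ?_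
  simpa only [Function.comp_def, Real.sqrt_sq_eq_abs, Real.sqrt_zero] using hsq.sqrt

theorem exists_tendsto_of_mem_doublyStochastic (hA : ∀ t, A t ∈ doublyStochastic ℝ ι)
    {d : ℝ} (hd : 0 < d) (hdiag : ∀ t k, d ≤ A t k k) (hx : ∀ t, x (t + 1) = A t *ᵥ x t) :
    ∃ y, Tendsto x atTop (𝓝 y) := by
  obtain ⟨y, hy⟩ := exists_forall_tendsto_sum_comp_of_mem_doublyStochastic hA hx
  have hcoord (k : ι) : ∃ l, Tendsto (fun t => x t k) atTop (𝓝 l) := by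
    refine exists_tendsto_of_tendsto_sub_zero_of_avoids (s := range y) ?_
      (tendsto_succ_sub_nhds_zero_of_mem_doublyStochastic hA hd hdiag hx k)
      ((finite_range y).countable.dense_compl ℝ) fun c hc => ?_
    · have := (isBounded_range_of_mem_doublyStochastic hA hx).image_eval k
      rwa [← range_comp] at this
    · obtain ⟨δ, hδ, haway⟩ := eventually_le_abs_sub_of_tendsto_sum_abs_sub
        (fun c => hy _ (convexOn_univ_dist c)) hc
      exact ⟨δ, hδ, haway k⟩
  choose L hL using hcoord
  exact ⟨L, tendsto_pi_nhds.2 hL⟩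

/-- The left-growing product `A (t - 1) * ⋯ * A 1 * A 0`, the transition matrix from time `0` to
time `t` of the linear system `x (t + 1) = A t *ᵥ x t`. -/
def leftProd {R : Type*} [Semiring R] (A : ℕ → Matrix ι ι R) : ℕ → Matrix ι ι R
  | 0 => 1
  | t + 1 => A t * leftProd A t

theorem exists_tendsto_leftProd (hA : ∀ t, A t ∈ doublyStochastic ℝ ι)
    {d : ℝ} (hd : 0 < d) (hdiag : ∀ t k, d ≤ A t k k) :
    ∃ P, Tendsto (leftProd A) atTop (𝓝 P) := by
  have hcol (m : ι) : ∃ p, Tendsto (fun t => (leftProd A t).col m) atTop (𝓝 p) :=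
    exists_tendsto_of_mem_doublyStochastic hA hd hdiag fun _ => rfl
  choose P hP using hcol
  exact ⟨Matrix.of fun k m => P m k,
    tendsto_pi_nhds.2 fun k => tendsto_pi_nhds.2 fun m => tendsto_pi_nhds.1 (hP m) k⟩

theorem eq_sum_leftProd_smul {R E : Type*} [Semiring R] [AddCommMonoid E] [Module R E]
    {A : ℕ → Matrix ι ι R} {X : ℕ → ι → E} (hX : ∀ t k, X (t + 1) k = ∑ l, A t k l • X t l)
    (t : ℕ) (k : ι) : X t k = ∑ m, leftProd A t k m • X 0 m := by
  induction t generalizing k with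
  | zero => simp [leftProd, Matrix.one_apply]
  | succ t ih =>
    simp only [hX, ih, leftProd, Matrix.mul_apply, Finset.smul_sum, Finset.sum_smul, smul_smul]
    exact Finset.sum_comm

theorem exists_tendsto_of_eq_sum_smul {E : Type*} [AddCommMonoid E] [Module ℝ E]
    [TopologicalSpace E] [ContinuousAdd E] [ContinuousSMul ℝ E] {X : ℕ → ι → E}
    (hA : ∀ t, A t ∈ doublyStochastic ℝ ι) {d : ℝ} (hd : 0 < d) (hdiag : ∀ t k, d ≤ A t k k)
    (hX : ∀ t k, X (t + 1) k = ∑ l, A t k l • X t l) : ∃ L, Tendsto X atTop (𝓝 L) := by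
  obtain ⟨P, hP⟩ := exists_tendsto_leftProd hA hd hdiag
  refine ⟨fun k => ∑ m, P k m • X 0 m, tendsto_pi_nhds.2 fun k => ?_⟩
  simp only [eq_sum_leftProd_smul hX _ k]
  exact tendsto_finsetSum _ fun m _ =>
    (tendsto_pi_nhds.1 (tendsto_pi_nhds.1 hP k) m).smul_const (X 0 m)

end DoublyStochastic

section PairwiseAveraging

variable {ι : Type*} [DecidableEq ι]

/-- The matrix of a pairwise averaging step: agents `i` and `j` both move towards each other by
the fraction `w` of their difference. For `i = j` it is the identity. -/
def pairAveraging {R : Type*} [Ring R] (w : R) (i j : ι) : Matrix ι ι R :=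
  (1 - w) • 1 + w • Matrix.swap R i j

theorem one_sub_le_pairAveraging_diag {R : Type*} [Ring R] [PartialOrder R] [IsOrderedRing R]
    {w : R} (hw : 0 ≤ w) (i j k : ι) : 1 - w ≤ pairAveraging w i j k k := by
  have hswap : 0 ≤ Matrix.swap R i j k k := by
    simp only [Matrix.swap, Equiv.Perm.permMatrix, PEquiv.toMatrix_apply]
    split_ifs
    exacts [zero_le_one, le_rfl]
  simpa [pairAveraging] using mul_nonneg hw hswap

variable [Fintype ι]

theorem pairAveraging_mem_doublyStochastic {R : Type*} [Ring R] [PartialOrder R] [IsOrderedRing R]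
    {w : R} (hw : w ∈ Icc 0 1) (i j : ι) : pairAveraging w i j ∈ doublyStochastic R ι :=
  convex_doublyStochastic (one_mem _) permMatrix_mem_doublyStochastic
    (sub_nonneg.2 hw.2) hw.1 (sub_add_cancel 1 w)

theorem sum_pairAveraging_smul {R E : Type*} [CommRing R] [AddCommGroup E] [Module R E]
    (w : R) (i j : ι) (v : ι → E) (k : ι) :
    ∑ l, pairAveraging w i j k l • v l =
      if k = i then v i + w • (v j - v i) else if k = j then v j + w • (v i - v j) else v k := by
  have hsum : ∑ l, pairAveraging w i j k l • v l =
      (1 - w) • v k + w • v (Equiv.swap i j k) := by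
    simp [pairAveraging, Matrix.swap, add_smul, Finset.sum_add_distrib, Matrix.one_apply,
      PEquiv.toMatrix_apply]
  rw [hsum, Equiv.swap_apply_def]
  split_ifs with hi hj
  · subst hi; module
  · subst hj; module
  · module

end PairwiseAveraging

theorem wd_dynamics_converge_general {ι E : Type*} [Finite ι] [DecidableEq ι]
    [SeminormedAddCommGroup E] [NormedSpace ℝ E] {c : ℝ} (hc : c < 1) {μ ε : ℕ → ℝ}
    (hμ : ∀ t, μ t ∈ Icc 0 c) {i j : ℕ → ι} {X : ℕ → ι → E}
    (hdyn : ∀ t k, X (t + 1) k =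
      if ‖X t (i t) - X t (j t)‖ ≤ ε t then
        if k = i t then X t (i t) + μ t • (X t (j t) - X t (i t))
        else if k = j t then X t (j t) + μ t • (X t (i t) - X t (j t))
        else X t k
      else X t k) :
    ∃ L, Tendsto X atTop (𝓝 L) := by
  cases nonempty_fintype ι
  let w (t : ℕ) : ℝ := if ‖X t (i t) - X t (j t)‖ ≤ ε t then μ t else 0
  have hw (t : ℕ) : w t ∈ Icc 0 c := by
    unfold w
    split_ifs
    exacts [hμ t, ⟨le_rfl, (hμ t).1.trans (hμ t).2⟩]
  refine exists_tendsto_of_eq_sum_smul (A := fun t => pairAveraging (w t) (i t) (j t))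
    (fun t => pairAveraging_mem_doublyStochastic ⟨(hw t).1, (hw t).2.trans hc.le⟩ _ _)
    (sub_pos.2 hc)
    (fun t k => (sub_le_sub_left (hw t).2 1).trans (one_sub_le_pairAveraging_diag (hw t).1 _ _ k))
    fun t k => ?_
  rw [hdyn, sum_pairAveraging_smul]
  unfold w
  split_ifs <;> simp [*]

/-- **Convergence of the Weisbuch–Deffuant dynamics.** For an arbitrary sequence of pairs
of distinct agents `(i_t, j_t)`, the process in which at time `t` agents `i_t` and `j_t`
move towards each other by the fraction `μ` of their opinion difference whenever this
difference is at most `ε` (and nothing happens otherwise) converges. -/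
theorem wd_dynamics_converge
    (n : ℕ) (hn : 2 ≤ n) (μ ε : ℝ) (hμ0 : 0 < μ) (hμ : μ < 1 / 2) (hε : 0 < ε)
    (i j : ℕ → Fin n) (hij : ∀ t, i t ≠ j t)
    (X : ℕ → Fin n → ℝ)
    (hdyn : ∀ t, ∀ k : Fin n,
      X (t + 1) k =
        if |X t (i t) - X t (j t)| ≤ ε then
          if k = i t then X t (i t) + μ * (X t (j t) - X t (i t))
          else if k = j t then X t (j t) + μ * (X t (i t) - X t (j t))
          else X t k
        else X t k) :
    ∃ L : Fin n → ℝ, Tendsto X atTop (nhds L) := by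
  exact wd_dynamics_converge_general (by linarith) (fun _ => ⟨hμ0.le, le_rfl⟩) hdyn
end
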